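/- arXiv:1301.3091 — 2 statements merged into one kernel-verified Lean document; each statement's English description precedes it below -/
import Mathlib

section
/- Let Γ be an infinite group generated by a finite set S with S = S⁻¹ and id ∉ S, and let G = G(Γ,S) be its Cayley graph, with connective constant μ(G). Let ρ ∈ Γ with ρ ≠ id, let N be the normal closure of {ρ} in Γ, and let G_ρ be the simple graph on the quotient group Γ/N in which distinct cosets ḡ, h̄ are adjacent if and only if ḡ⁻¹h̄ is the image in Γ/N of some element of S. Let σ_n^ρ denote the number of n-step self-avoiding walks in G_ρ starting at the identity coset. Then limsup_{n→∞} (σ_n^ρ)^{1/n} < μ(G). -/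
open Filter SimpleGraph

noncomputable def sawCount {V : Type*} (G : SimpleGraph V) (v : V) (n : ℕ) : ℕ :=
  Nat.card {p : (w : V) × G.Walk v w // p.2.IsPath ∧ p.2.length = n}

def HasConnectiveConst {V : Type*} (G : SimpleGraph V) (μ : ℝ) : Prop :=
  ∀ v : V, Filter.Tendsto (fun n : ℕ => (sawCount G v n : ℝ) ^ (1 / (n : ℝ)))
    Filter.atTop (nhds μ)

/-- The Cayley graph of a group with respect to a (symmetric) set `S` of generators:
distinct `g, h` are adjacent iff `g⁻¹ * h ∈ S` (for `S = S⁻¹` the symmetrisation below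
agrees with this). -/
def cayleyGraph {Γ : Type*} [Group Γ] (S : Set Γ) : SimpleGraph Γ :=
  SimpleGraph.fromRel (fun g h => g⁻¹ * h ∈ S)

/-!
Write `π` for the quotient map and `Q` for its target. A shortest word spelling a nontrivial
element of `ker π` maps to a simple cycle in the graph of `Q`, but it is not closed in `Γ`. If a
self-avoiding word of `Q` visits some translate of this cycle only during a short time interval,
then its factor between the first and the last visit can be replaced by a detour once around the
cycle and on to the endpoint. The outcome is not self-avoiding in `Q`, but its lift to `Γ` is. A
word of length `n` with `δ n` well separated such sites thus has exponentially many lifts, and a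
lift together with the labels of its detours determines both the word and the sites used. Summing
over all lifts with weight `z` per letter, for `z` slightly smaller than `1 / μ`, and a small
weight per detour shows that the number of words with `δ n` sites grows strictly slower than
`μ ^ n`.

It remains to see that words without many sites are also few, which is Kesten's pattern argument.
By induction on `k`, the words that visit fewer than `k` times each translate, by one of their
vertices, of the difference set of the cycle grow strictly slower than `μ ^ n`. Indeed, cut a word
with at most `k` such visits into blocks. If nearly all blocks themselves have fewer than `k`
visits, the induction hypothesis bounds the number of such words. Otherwise a positive fraction of
blocks contain all `k` visits to some translate, and each of them provides a site. For `k` larger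
than the size of the difference set the condition holds for every self-avoiding word.
-/

section

open scoped Classical Pointwise

section Words

variable {M : Type*} [Monoid M]

/-- The `i`-th partial product of a word: the vertex reached after `i` steps by the walk from `1`
whose steps are the letters of the word. -/
def prefixProd (l : List M) (i : ℕ) : M := (l.take i).prod

@[simp] theorem prefixProd_zero (l : List M) : prefixProd l 0 = 1 := by simp [prefixProd]

theorem prefixProd_of_length_le {l : List M} {i : ℕ} (hi : l.length ≤ i) :
    prefixProd l i = l.prod := by
  rw [prefixProd, List.take_of_length_le hi]

@[simp] theorem prefixProd_length (l : List M) : prefixProd l l.length = l.prod :=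
  prefixProd_of_length_le le_rfl

@[simp] theorem prefixProd_cons_succ (s : M) (l : List M) (i : ℕ) :
    prefixProd (s :: l) (i + 1) = s * prefixProd l i := by
  simp [prefixProd]

theorem prefixProd_add (l : List M) (a b : ℕ) :
    prefixProd l (a + b) = prefixProd l a * prefixProd (l.drop a) b := by
  rw [prefixProd, List.take_add, List.prod_append, prefixProd, prefixProd]

theorem prefixProd_take (l : List M) (a i : ℕ) :
    prefixProd (l.take a) i = prefixProd l (min i a) := by
  rw [prefixProd, List.take_take, prefixProd]

theorem prefixProd_take_of_le {l : List M} {i a : ℕ} (h : i ≤ a) :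
    prefixProd (l.take a) i = prefixProd l i := by
  rw [prefixProd_take, min_eq_left h]

theorem prefixProd_append_of_le {l₁ : List M} {i : ℕ} (h : i ≤ l₁.length) (l₂ : List M) :
    prefixProd (l₁ ++ l₂) i = prefixProd l₁ i := by
  rw [prefixProd, List.take_append_of_le_length h, prefixProd]

theorem prefixProd_append_length_add (l₁ l₂ : List M) (i : ℕ) :
    prefixProd (l₁ ++ l₂) (l₁.length + i) = l₁.prod * prefixProd l₂ i := by
  rw [prefixProd_add, prefixProd_append_of_le le_rfl, prefixProd_length, List.drop_left]

/-- A word is self-avoiding if it spells a self-avoiding walk: its partial products are distinct. -/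
def IsSAW (l : List M) : Prop := Set.InjOn (prefixProd l) (Set.Iic l.length)

theorem isSAW_nil : IsSAW ([] : List M) := by
  intro i hi j hj _
  simp_all

theorem IsSAW.take {l : List M} (h : IsSAW l) (a : ℕ) : IsSAW (l.take a) := by
  intro i hi j hj hij
  simp only [List.length_take, Set.mem_Iic, le_inf_iff] at hi hj
  rw [prefixProd_take_of_le hi.1, prefixProd_take_of_le hj.1] at hij
  exact h hi.2 hj.2 hij

theorem IsSAW.drop {l : List M} (h : IsSAW l) (a : ℕ) : IsSAW (l.drop a) := by
  intro i hi j hj hij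
  simp only [List.length_drop, Set.mem_Iic] at hi hj
  obtain ha | ha := le_total l.length a
  · omega
  · have := @h (a + i) (Set.mem_Iic.2 (by omega)) (a + j) (Set.mem_Iic.2 (by omega))
    simpa only [prefixProd_add, hij, Nat.add_left_cancel_iff, forall_const] using this

/-- The words of length `n` over the alphabet `T`. -/
noncomputable def words {α : Type*} (T : Finset α) (n : ℕ) : Finset (List α) :=
  (Fintype.piFinset fun _ : Fin n => T).image List.ofFn

theorem mem_words {α : Type*} {T : Finset α} {n : ℕ} {l : List α} :
    l ∈ words T n ↔ l.length = n ∧ ∀ x ∈ l, x ∈ T := by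
  constructor
  · intro h
    obtain ⟨f, hf, rfl⟩ := Finset.mem_image.1 h
    simpa [List.mem_ofFn] using hf
  · rintro ⟨rfl, h⟩
    exact Finset.mem_image.2 ⟨l.get, Fintype.mem_piFinset.2 fun i => h _ (l.get_mem i),
      List.ofFn_get l⟩

theorem card_words {α : Type*} (T : Finset α) (n : ℕ) : (words T n).card = T.card ^ n := by
  rw [words, Finset.card_image_of_injective _ List.ofFn_injective, Fintype.card_piFinset_const]

/-- The self-avoiding words of length `n` over the alphabet `T`. -/
noncomputable def saws (T : Finset M) (n : ℕ) : Finset (List M) := (words T n).filter IsSAW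

theorem mem_saws {T : Finset M} {n : ℕ} {l : List M} :
    l ∈ saws T n ↔ l.length = n ∧ (∀ x ∈ l, x ∈ T) ∧ IsSAW l := by
  rw [saws, Finset.mem_filter, mem_words, and_assoc]

theorem card_saws_le (T : Finset M) (n : ℕ) : (saws T n).card ≤ T.card ^ n :=
  (Finset.card_filter_le _ _).trans_eq (card_words T n)

theorem take_mem_saws {T : Finset M} {a b : ℕ} {w : List M} (h : w ∈ saws T (a + b)) :
    w.take a ∈ saws T a := by
  obtain ⟨hlen, halph, hsaw⟩ := mem_saws.1 h
  exact mem_saws.2 ⟨by simp [hlen], fun x hx => halph x (List.mem_of_mem_take hx), hsaw.take a⟩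

theorem drop_mem_saws {T : Finset M} {a b : ℕ} {w : List M} (h : w ∈ saws T (a + b)) :
    w.drop a ∈ saws T b := by
  obtain ⟨hlen, halph, hsaw⟩ := mem_saws.1 h
  exact mem_saws.2 ⟨by simp [hlen], fun x hx => halph x (List.mem_of_mem_drop hx), hsaw.drop a⟩

theorem sum_saws_add_le (T : Finset M) (a b : ℕ) {f g : List M → ℝ} (hf : 0 ≤ f) (hg : 0 ≤ g) :
    ∑ w ∈ saws T (a + b), f (w.take a) * g (w.drop a) ≤
      (∑ w ∈ saws T a, f w) * ∑ w ∈ saws T b, g w := by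
  have hinj : Set.InjOn (fun w : List M => (w.take a, w.drop a)) (saws T (a + b)) := by
    intro v _ w _ h
    obtain ⟨htake, hdrop⟩ := Prod.mk.inj h
    rw [← List.take_append_drop a v, ← List.take_append_drop a w, htake, hdrop]
  rw [Finset.sum_mul_sum, ← Finset.sum_product']
  rw [← Finset.sum_image (f := fun p : List M × List M => f p.1 * g p.2) hinj]
  refine Finset.sum_le_sum_of_subset_of_nonneg ?_ fun p _ _ => mul_nonneg (hf _) (hg _)
  rw [Finset.image_subset_iff]
  exact fun w hw => Finset.mem_product.2 ⟨take_mem_saws hw, drop_mem_saws hw⟩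

variable {H : Type*} [Group H]

theorem IsSAW.one_notMem {l : List H} (h : IsSAW l) : 1 ∉ l := by
  intro h1
  obtain ⟨l₁, l₂, rfl⟩ := List.mem_iff_append.1 h1
  have := @h l₁.length (Set.mem_Iic.2 (by simp)) (l₁.length + 1) (Set.mem_Iic.2 (by simp))
  simp [prefixProd_append_length_add, prefixProd_append_of_le] at this

theorem isSAW_append {l₁ l₂ : List H} (h₁ : Set.InjOn (prefixProd l₁) (Set.Iio l₁.length))
    (h₂ : IsSAW l₂)
    (h : ∀ i < l₁.length, ∀ j ≤ l₂.length, prefixProd l₁ i ≠ l₁.prod * prefixProd l₂ j) :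
    IsSAW (l₁ ++ l₂) := by
  have hcases : ∀ i ≤ (l₁ ++ l₂).length,
      (i < l₁.length ∧ prefixProd (l₁ ++ l₂) i = prefixProd l₁ i) ∨
      ∃ j ≤ l₂.length, i = l₁.length + j ∧ prefixProd (l₁ ++ l₂) i = l₁.prod * prefixProd l₂ j := by
    intro i hi
    rw [List.length_append] at hi
    rcases lt_or_ge i l₁.length with hi₁ | hi₁
    · exact .inl ⟨hi₁, prefixProd_append_of_le hi₁.le l₂⟩
    · obtain ⟨j, rfl⟩ := Nat.exists_eq_add_of_le hi₁
      exact .inr ⟨j, by omega, rfl, prefixProd_append_length_add l₁ l₂ j⟩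
  intro i hi i' hi' heq
  rcases hcases i hi with ⟨hlt, hi⟩ | ⟨j, hj, rfl, hi⟩ <;>
    rcases hcases i' hi' with ⟨hlt', hi'⟩ | ⟨j', hj', rfl, hi'⟩ <;> rw [hi, hi'] at heq
  · exact h₁ hlt hlt' heq
  · exact (h i hlt j' hj' heq).elim
  · exact (h i' hlt' j hj heq.symm).elim
  · rw [h₂ hj hj' (mul_left_cancel heq)]

end Words

section Spell

variable {H : Type*} [Group H]

/-- The word spelled by a walk: the sequence of its increments. -/
def spell {G : SimpleGraph H} {v w : H} (p : G.Walk v w) : List H :=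
  p.darts.map fun d => d.fst⁻¹ * d.snd

theorem length_spell {G : SimpleGraph H} {v w : H} (p : G.Walk v w) :
    (spell p).length = p.length := by
  rw [spell, List.length_map, Walk.length_darts]

theorem getVert_eq_mul_prefixProd_spell {G : SimpleGraph H} {v w : H} (p : G.Walk v w) (i : ℕ) :
    p.getVert i = v * prefixProd (spell p) i := by
  induction p generalizing i with
  | nil => simp [spell, prefixProd]
  | cons h p ih => cases i <;> simp_all [spell, ← mul_assoc]

theorem isSAW_spell_iff {G : SimpleGraph H} {v w : H} (p : G.Walk v w) :
    IsSAW (spell p) ↔ p.IsPath := by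
  rw [← Walk.IsPath.getVert_injOn_iff, funext (getVert_eq_mul_prefixProd_spell p), IsSAW,
    length_spell]
  exact forall₄_congr fun i _ j _ => by rw [mul_right_inj]

theorem spell_injective {G : SimpleGraph H} {v : H} :
    Function.Injective fun p : (w : H) × G.Walk v w => spell p.2 := by
  rintro ⟨w, p⟩ ⟨w', q⟩ (h : spell p = spell q)
  have hvert : ∀ i, p.getVert i = q.getVert i := fun i => by
    rw [getVert_eq_mul_prefixProd_spell, getVert_eq_mul_prefixProd_spell, h]
  have hlen : p.length = q.length := by rw [← length_spell, ← length_spell, h]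
  obtain rfl : w = w' := by
    rw [← p.getVert_length, ← q.getVert_length, ← hlen, hvert]
  exact congrArg _ (Walk.ext_getVert hvert)

theorem exists_spell_eq (T : Set H) (l : List H) (hT : ∀ x ∈ l, x ∈ T ∪ T⁻¹) (h1 : 1 ∉ l) (v : H) :
    ∃ (w : H) (p : (cayleyGraph T).Walk v w), spell p = l := by
  induction l generalizing v with
  | nil => exact ⟨v, .nil, rfl⟩
  | cons s l ih =>
    rw [List.forall_mem_cons] at hT
    rw [List.mem_cons, not_or] at h1
    obtain ⟨w, p, rfl⟩ := ih hT.2 h1.2 (v * s)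
    have hadj : (cayleyGraph T).Adj v (v * s) := by
      simpa [cayleyGraph, Ne.symm h1.1] using hT.1
    exact ⟨w, .cons hadj p, by simp [spell]⟩

theorem mem_of_mem_spell {T : Set H} {v w : H} (p : (cayleyGraph T).Walk v w) :
    ∀ x ∈ spell p, x ∈ T ∪ T⁻¹ := by
  intro x hx
  obtain ⟨d, -, rfl⟩ := List.mem_map.1 hx
  simpa [cayleyGraph] using (fromRel_adj _ _ _).1 d.adj |>.2

theorem sawCount_cayleyGraph (S : Finset H) (v : H) (n : ℕ) :
    sawCount (cayleyGraph (S : Set H)) v n = (saws (S ∪ S⁻¹) n).card := by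
  have himage : (fun p : (w : H) × (cayleyGraph (S : Set H)).Walk v w => spell p.2) ''
      {p | p.2.IsPath ∧ p.2.length = n} = saws (S ∪ S⁻¹) n := by
    ext l
    simp only [Set.mem_image, Finset.mem_coe, mem_saws, Finset.mem_union, Finset.mem_inv']
    constructor
    · rintro ⟨⟨w, p⟩, ⟨hp, hn⟩, rfl⟩
      exact ⟨(length_spell p).trans hn, mem_of_mem_spell p, (isSAW_spell_iff p).2 hp⟩
    · rintro ⟨hn, hmem, hsaw⟩
      obtain ⟨w, p, rfl⟩ := exists_spell_eq S l hmem hsaw.one_notMem v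
      exact ⟨⟨w, p⟩, ⟨(isSAW_spell_iff p).1 hsaw, (length_spell p).symm.trans hn⟩, rfl⟩
  rw [← Set.ncard_coe_finset, ← himage, Set.ncard_image_of_injective _ spell_injective]
  rfl

end Spell

section Growth

/-- `f n` grows exponentially slower than `μ ^ n`. -/
def GrowthLT (f : ℕ → ℝ) (μ : ℝ) : Prop :=
  ∃ y, 0 < y ∧ y < μ ∧ f =O[atTop] fun n : ℕ => y ^ n

variable {f g : ℕ → ℝ} {μ : ℝ}

theorem growthLT_of_le {C y : ℝ} (hf : 0 ≤ f) (hy : 0 < y) (hyμ : y < μ)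
    (h : ∀ n, f n ≤ C * y ^ n) : GrowthLT f μ := by
  refine ⟨y, hy, hyμ, Asymptotics.isBigO_of_le' (c := C) _ fun n => ?_⟩
  rw [Real.norm_of_nonneg (hf n), Real.norm_of_nonneg (by positivity)]
  exact h n

theorem GrowthLT.pos (hf : GrowthLT f μ) : 0 < μ :=
  let ⟨_, hy, hyμ, _⟩ := hf
  hy.trans hyμ

theorem GrowthLT.mono (hg : GrowthLT g μ) (hf : 0 ≤ f) (h : f ≤ g) : GrowthLT f μ := by
  obtain ⟨y, hy, hyμ, hO⟩ := hg
  refine ⟨y, hy, hyμ, (Asymptotics.isBigO_of_le _ fun n => ?_).trans hO⟩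
  rw [Real.norm_of_nonneg (hf n), Real.norm_of_nonneg ((hf n).trans (h n))]
  exact h n

theorem GrowthLT.add (hf : GrowthLT f μ) (hg : GrowthLT g μ) : GrowthLT (f + g) μ := by
  obtain ⟨y, hy, hyμ, hfy⟩ := hf
  obtain ⟨z, hz, hzμ, hgz⟩ := hg
  exact ⟨max y z, lt_max_of_lt_left hy, max_lt hyμ hzμ,
    (hfy.trans (isBigO_pow_pow_of_le_left hy.le (le_max_left y z))).add
      (hgz.trans (isBigO_pow_pow_of_le_left hz.le (le_max_right y z)))⟩

theorem GrowthLT.exists_mul_lt_pow_succ (hf : GrowthLT f μ) (c : ℝ) :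
    ∃ n, c * f n < μ ^ (n + 1) := by
  have hμ := hf.pos
  obtain ⟨y, hy, hyμ, hO⟩ := hf
  have ho : (fun n => c * f n) =o[atTop] fun n : ℕ => μ ^ n :=
    (hO.const_mul_left c).trans_isLittleO (isLittleO_pow_pow_of_lt_left hy.le hyμ)
  obtain ⟨n, hn⟩ := (ho.bound (half_pos hμ)).exists
  refine ⟨n, (le_abs_self _).trans_lt ?_⟩
  rw [Real.norm_eq_abs, Real.norm_of_nonneg (by positivity)] at hn
  have : 0 < μ ^ n := by positivity
  rw [pow_succ]
  nlinarith

theorem GrowthLT.limsup_rpow_lt (hf : GrowthLT f μ) (h0 : 0 ≤ f) :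
    limsup (fun n : ℕ => f n ^ (1 / (n : ℝ))) atTop < μ := by
  obtain ⟨y, hy, hyμ, hO⟩ := hf
  obtain ⟨C, hC, hbound⟩ := hO.exists_pos
  refine lt_of_le_of_lt ?_ hyμ
  have hlim : Tendsto (fun n : ℕ => C ^ (1 / (n : ℝ)) * y) atTop (nhds y) := by
    have := (tendsto_const_nhds (x := C)).rpow tendsto_one_div_atTop_nhds_zero_nat (.inl hC.ne')
    simpa using this.mul_const y
  rw [← hlim.limsup_eq]
  refine limsup_le_limsup ?_
    (isCoboundedUnder_le_of_le atTop (x := 0) fun n => Real.rpow_nonneg (h0 n) _)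
    hlim.isBoundedUnder_le
  filter_upwards [hbound.bound, eventually_ne_atTop 0] with n hn hn0
  rw [Real.norm_of_nonneg (h0 n), Real.norm_of_nonneg (by positivity)] at hn
  calc f n ^ (1 / (n : ℝ)) ≤ (C * y ^ n) ^ (1 / (n : ℝ)) := by
        gcongr
        exact h0 n
    _ = C ^ (1 / (n : ℝ)) * y := by
        rw [Real.mul_rpow hC.le (by positivity), one_div, Real.pow_rpow_inv_natCast hy.le hn0]

theorem summable_mul_inv_pow_of_tendsto_rpow {y : ℝ} (h0 : 0 ≤ f)
    (hf : Tendsto (fun n : ℕ => f n ^ (1 / (n : ℝ))) atTop (nhds μ)) (hμ : 0 < μ) (hy : μ < y) :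
    Summable fun n => f n * y⁻¹ ^ n := by
  obtain ⟨x, hμx, hxy⟩ := exists_between hy
  have hx : 0 < x := hμ.trans hμx
  have hy0 : 0 < y := hx.trans hxy
  have hgeom : Summable fun n : ℕ => (x / y) ^ n :=
    summable_geometric_of_lt_one (by positivity) ((div_lt_one hy0).2 hxy)
  refine hgeom.of_norm_bounded_eventually_nat ?_
  filter_upwards [hf.eventually_lt_const hμx, eventually_ne_atTop 0] with n hn hn0
  rw [Real.norm_of_nonneg (mul_nonneg (h0 n) (by positivity)), div_eq_mul_inv, mul_pow]
  gcongr
  calc f n = (f n ^ (1 / (n : ℝ))) ^ n := by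
        rw [one_div, Real.rpow_inv_natCast_pow (h0 n) hn0]
    _ ≤ x ^ n := pow_le_pow_left₀ (Real.rpow_nonneg (h0 n) _) hn.le n

end Growth

section Blocks

/-- The indices of those among the first `q` consecutive blocks of length `m` of the word `w` that
satisfy `R`. -/
noncomputable def blocksWith {α : Type*} (R : List α → Prop) (m q : ℕ) (w : List α) : Finset ℕ :=
  (Finset.range q).filter fun j => R ((w.drop (j * m)).take m)

theorem mem_blocksWith {α : Type*} {R : List α → Prop} {m q j : ℕ} {w : List α} :
    j ∈ blocksWith R m q w ↔ j < q ∧ R ((w.drop (j * m)).take m) := by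
  rw [blocksWith, Finset.mem_filter, Finset.mem_range]

theorem mul_add_lt_length_of_mem_blocksWith {α : Type*} {R : List α → Prop} {N j : ℕ} {w : List α}
    (hj : j ∈ blocksWith R (N + 1) (w.length / (N + 1)) w) : j * (N + 1) + N < w.length := by
  have := (Nat.le_div_iff_mul_le N.add_one_pos).1 (Nat.succ_le_of_lt (mem_blocksWith.1 hj).1)
  rw [Nat.succ_mul] at this
  omega

theorem mul_succ_add_lt_mul_succ {j j' : ℕ} (h : j < j') (N : ℕ) :
    j * (N + 1) + N < j' * (N + 1) := by
  have := Nat.mul_le_mul_right (N + 1) (Nat.succ_le_of_lt h)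
  rw [Nat.succ_mul] at this
  omega

theorem card_blocksWith_succ {α : Type*} (R : List α → Prop) (m q : ℕ) (w : List α) :
    (blocksWith R m (q + 1) w).card =
      (if R (w.take m) then 1 else 0) + (blocksWith R m q (w.drop m)).card := by
  simp only [blocksWith, Finset.card_filter]
  rw [Finset.sum_range_succ', add_comm]
  simp [List.drop_drop, add_mul, add_comm]

variable {M : Type*} [Monoid M]

theorem sum_pow_card_blocksWith_le (T : Finset M) (R : List M → Prop) (m q r : ℕ) {θ : ℝ}
    (hθ : 0 ≤ θ) :
    ∑ w ∈ saws T (q * m + r), θ ^ (blocksWith R m q w).card ≤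
      (((saws T m).filter (¬R ·)).card + θ * (saws T m).card) ^ q * (T.card : ℝ) ^ r := by
  induction q with
  | zero => simpa [blocksWith] using mod_cast card_saws_le T r
  | succ q ih =>
    have hblock : ∑ b ∈ saws T m, θ ^ (if R b then 1 else 0) ≤
        ((saws T m).filter (¬R ·)).card + θ * (saws T m).card := by
      rw [Finset.card_filter, Finset.card_eq_sum_ones, Nat.cast_sum, Nat.cast_sum, Finset.mul_sum,
        ← Finset.sum_add_distrib]
      refine Finset.sum_le_sum fun b _ => ?_
      by_cases hb : R b <;> simp [hb, hθ]
    calc ∑ w ∈ saws T ((q + 1) * m + r), θ ^ (blocksWith R m (q + 1) w).card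
      _ = ∑ w ∈ saws T (m + (q * m + r)),
            θ ^ (if R (w.take m) then 1 else 0) * θ ^ (blocksWith R m q (w.drop m)).card := by
          rw [show (q + 1) * m + r = m + (q * m + r) by ring]
          simp only [card_blocksWith_succ, pow_add]
      _ ≤ (∑ b ∈ saws T m, θ ^ (if R b then 1 else 0)) *
            ∑ w ∈ saws T (q * m + r), θ ^ (blocksWith R m q w).card :=
          sum_saws_add_le T m (q * m + r) (f := fun b => θ ^ (if R b then 1 else 0))
            (g := fun w => θ ^ (blocksWith R m q w).card)
            (fun _ => pow_nonneg hθ _) fun _ => pow_nonneg hθ _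
      _ ≤ _ := by
          rw [pow_succ', mul_assoc]
          gcongr

theorem card_filter_card_blocksWith_le_mul_rpow_le (T : Finset M) (R : List M → Prop) (m n : ℕ)
    (c : ℝ) {θ : ℝ} (hθ : 0 < θ) (hθ1 : θ ≤ 1) :
    ((saws T n).filter fun w => (blocksWith R m (n / m) w).card ≤ c).card * θ ^ c ≤
      (((saws T m).filter (¬R ·)).card + θ * (saws T m).card) ^ (n / m) *
        (T.card : ℝ) ^ (n % m) := by
  set E := (saws T n).filter fun w => (blocksWith R m (n / m) w).card ≤ c
  calc E.card * θ ^ c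
    _ = ∑ _ ∈ E, θ ^ c := by rw [Finset.sum_const, nsmul_eq_mul]
    _ ≤ ∑ w ∈ E, θ ^ (blocksWith R m (n / m) w).card := by
        refine Finset.sum_le_sum fun w hw => ?_
        rw [← Real.rpow_natCast]
        exact Real.rpow_le_rpow_of_exponent_ge hθ hθ1 (Finset.mem_filter.1 hw).2
    _ ≤ ∑ w ∈ saws T (n / m * m + n % m), θ ^ (blocksWith R m (n / m) w).card := by
        rw [Nat.div_add_mod']
        exact Finset.sum_le_sum_of_subset_of_nonneg (Finset.filter_subset _ _)
          fun _ _ _ => by positivity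
    _ ≤ _ := sum_pow_card_blocksWith_le T R m _ _ hθ.le

theorem exists_add_mul_lt_pow_and_mul_rpow_lt {m : ℕ} {B μ : ℝ} (hμ : 0 < μ) (hB : B < μ ^ m)
    (W : ℝ) : ∃ x θ δ : ℝ, 0 < x ∧ 0 < θ ∧ θ < 1 ∧ 0 < δ ∧ B + θ * W < x ^ m ∧
      x * θ ^ (-δ) < μ := by
  obtain ⟨x, hBx, hx, hxμ⟩ : ∃ x, B < x ^ m ∧ 0 < x ∧ x < μ :=
    ((((continuous_pow m).tendsto μ).eventually_const_lt hB).filter_mono nhdsWithin_le_nhds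
      |>.and (Ioo_mem_nhdsLT hμ)).exists
  obtain ⟨θ, hθx, hθ, hθ1⟩ : ∃ θ, B + θ * W < x ^ m ∧ 0 < θ ∧ θ < 1 := by
    have : Tendsto (fun θ : ℝ => B + θ * W) (nhds 0) (nhds (B + 0 * W)) :=
      Continuous.tendsto (by fun_prop) 0
    exact ((this.eventually_lt_const (by simpa using hBx)).filter_mono nhdsWithin_le_nhds
      |>.and (Ioo_mem_nhdsGT one_pos)).exists
  obtain ⟨δ, hδμ, hδ⟩ : ∃ δ : ℝ, x * θ ^ (-δ) < μ ∧ 0 < δ := by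
    have : Tendsto (fun δ : ℝ => x * θ ^ (-δ)) (nhds 0) (nhds (x * θ ^ (-0 : ℝ))) :=
      Continuous.tendsto (by fun_prop (disch := exact hθ.ne')) 0
    exact ((this.eventually_lt_const (by simpa using hxμ)).filter_mono nhdsWithin_le_nhds
      |>.and (self_mem_nhdsWithin (s := Set.Ioi 0))).exists
  exact ⟨x, θ, δ, hx, hθ, hθ1, hδ, hθx, hδμ⟩

theorem exists_growthLT_card_blocksWith_le {T : Finset M} {R : List M → Prop} {m : ℕ} {μ : ℝ}
    (hm : 0 < m) (hμ : 0 < μ) (hcard : (((saws T m).filter (¬R ·)).card : ℝ) < μ ^ m) :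
    ∃ δ : ℝ, 0 < δ ∧ GrowthLT (fun n => ((saws T n).filter fun w =>
      (blocksWith R m (n / m) w).card ≤ δ * n).card) μ := by
  obtain ⟨x, θ, δ, hx, hθ, hθ1, hδ, hθx, hδμ⟩ :=
    exists_add_mul_lt_pow_and_mul_rpow_lt hμ hcard (saws T m).card
  refine ⟨δ, hδ, growthLT_of_le (C := ∑ r ∈ Finset.range m, ((T.card : ℝ) / x) ^ r)
    (fun _ => Nat.cast_nonneg _) (by positivity) hδμ fun n => ?_⟩
  set E := (saws T n).filter fun w => (blocksWith R m (n / m) w).card ≤ δ * n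
  have hE : E.card * (θ ^ δ) ^ n ≤ (x ^ m) ^ (n / m) * (T.card : ℝ) ^ (n % m) := by
    rw [← Real.rpow_mul_natCast hθ.le]
    refine (card_filter_card_blocksWith_le_mul_rpow_le T R m n (δ * n) hθ hθ1.le).trans ?_
    gcongr
  calc (E.card : ℝ) = E.card * (θ ^ δ) ^ n * (θ ^ (-δ)) ^ n := by
        rw [mul_assoc, ← mul_pow, ← Real.rpow_add hθ, add_neg_cancel, Real.rpow_zero, one_pow,
          mul_one]
    _ ≤ (x ^ m) ^ (n / m) * (T.card : ℝ) ^ (n % m) * (θ ^ (-δ)) ^ n := by gcongr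
    _ = ((T.card : ℝ) / x) ^ (n % m) * (x * θ ^ (-δ)) ^ n := by
        have hxn : (x ^ m) ^ (n / m) * x ^ (n % m) = x ^ n := by
          rw [← pow_mul, ← pow_add, Nat.div_add_mod]
        rw [div_pow, mul_pow, ← hxn]
        field_simp
    _ ≤ _ := by
        gcongr
        exact Finset.single_le_sum (f := fun r => ((T.card : ℝ) / x) ^ r)
          (fun _ _ => by positivity) (Finset.mem_range.2 (Nat.mod_lt n hm))

end Blocks

section Visits

variable {H : Type*} [Group H] {D : Finset H} {k : ℕ} {w : List H}

/-- The times at which the word `w` visits the translate of `D` by its `i`-th vertex. -/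
noncomputable def visits (D : Finset H) (w : List H) (i : ℕ) : Finset ℕ :=
  (Finset.range (w.length + 1)).filter fun j => (prefixProd w i)⁻¹ * prefixProd w j ∈ D

/-- A word is `k`-sparse if it visits fewer than `k` times each translate of `D` by one of its
vertices. -/
def IsSparse (D : Finset H) (k : ℕ) (w : List H) : Prop := ∀ i ≤ w.length, (visits D w i).card < k

theorem mem_visits {i j : ℕ} :
    j ∈ visits D w i ↔ j ≤ w.length ∧ (prefixProd w i)⁻¹ * prefixProd w j ∈ D := by
  rw [visits, Finset.mem_filter, Finset.mem_range, Nat.lt_succ_iff]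

theorem visits_mono {D' : Finset H} (h : D ⊆ D') (w : List H) (i : ℕ) :
    visits D w i ⊆ visits D' w i :=
  Finset.monotone_filter_right _ fun _ _ hj => h hj

theorem not_isSparse_zero : ¬IsSparse D 0 w := fun h => (h 0 (Nat.zero_le _)).not_ge (Nat.zero_le _)

theorem IsSAW.card_visits_le (hw : IsSAW w) (D : Finset H) (i : ℕ) :
    (visits D w i).card ≤ D.card := by
  refine Finset.card_le_card_of_injOn (fun j => (prefixProd w i)⁻¹ * prefixProd w j)
    (fun j hj => (mem_visits.1 hj).2) fun j hj j' hj' h => ?_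
  exact hw (mem_visits.1 hj).1 (mem_visits.1 hj').1 (mul_left_cancel h)

theorem IsSAW.isSparse (hw : IsSAW w) (D : Finset H) : IsSparse D (D.card + 1) w :=
  fun i _ => Nat.lt_succ_of_le (hw.card_visits_le D i)

theorem image_visits_subset (D : Finset H) {a N i : ℕ} (haN : a + N ≤ w.length) (hi : i ≤ N) :
    (visits D ((w.drop a).take N) i).image (a + ·) ⊆ visits D w (a + i) := by
  rw [Finset.image_subset_iff]
  intro j hj
  obtain ⟨hjlen, hjD⟩ := mem_visits.1 hj
  have hjN : j ≤ N := hjlen.trans (by simp)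
  refine mem_visits.2 ⟨by omega, ?_⟩
  rw [prefixProd_take_of_le hi, prefixProd_take_of_le hjN] at hjD
  rwa [prefixProd_add, prefixProd_add, mul_inv_rev, mul_assoc, inv_mul_cancel_left]

theorem IsSparse.exists_visits_subset_Icc (hw : IsSparse D (k + 1) w) {a N : ℕ}
    (haN : a + N ≤ w.length) (hb : ¬IsSparse D k ((w.drop a).take N)) :
    ∃ i ∈ Finset.Icc a (a + N), visits D w i ⊆ Finset.Icc a (a + N) := by
  simp only [IsSparse, not_forall, not_lt] at hb
  obtain ⟨i, hi, hki⟩ := hb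
  replace hi : i ≤ N := hi.trans (by simp)
  -- the block already accounts for all the `k` visits that the sparsity of `w` allows
  have heq : (visits D ((w.drop a).take N) i).image (a + ·) = visits D w (a + i) := by
    refine Finset.eq_of_subset_of_card_le (image_visits_subset D haN hi) ?_
    rw [Finset.card_image_of_injective _ (add_right_injective a)]
    exact (Nat.lt_succ_iff.1 (hw (a + i) (by omega))).trans hki
  refine ⟨a + i, Finset.mem_Icc.2 (by omega), ?_⟩
  rw [← heq, Finset.image_subset_iff]
  intro j hj
  have : j ≤ N := (mem_visits.1 hj).1.trans (by simp)
  exact Finset.mem_Icc.2 (by omega)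

theorem card_filter_isSparse_take_le (T D : Finset H) (k N : ℕ) :
    ((saws T (N + 1)).filter fun w => IsSparse D k (w.take N)).card ≤
      T.card * ((saws T N).filter (IsSparse D k)).card := by
  have h := sum_saws_add_le T N 1 (f := fun w => if IsSparse D k w then 1 else 0) (g := 1)
    (fun w => by positivity) zero_le_one
  have h1 := card_saws_le T 1
  simp only [Pi.one_apply, mul_one, Finset.sum_boole, Finset.sum_const, nsmul_eq_mul] at h
  rw [pow_one] at h1
  rw [mul_comm]
  exact (Nat.cast_le.1 (h.trans_eq (Nat.cast_mul _ _).symm)).trans (Nat.mul_le_mul_left _ h1)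

end Visits

section Detours

variable {Γ Q : Type*} [Group Γ] [Group Q]

/-- A rule allowing one to replace the factor `old` of a word in `Q` by the image under `π` of the
self-avoiding word `new`. The image ends at the same point as `old` and stays in `region`. -/
structure Patch (π : Γ →* Q) (S : Finset Γ) where
  old : List Q
  new : List Γ
  region : Set Q
  mem_alphabet : ∀ x ∈ new, x ∈ S
  isSAW_new : IsSAW new
  map_prefixProd_new_mem : ∀ j, π (prefixProd new j) ∈ region
  map_prod_new : π new.prod = old.prod

/-- The patch replacing the empty word by itself. -/
@[simps] def Patch.trivial (π : Γ →* Q) (S : Finset Γ) : Patch π S where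
  old := []
  new := []
  region := {1}
  mem_alphabet := by simp
  isSAW_new := isSAW_nil
  map_prefixProd_new_mem := by simp [prefixProd]
  map_prod_new := by simp

/-- A patch whose image in `Q` returns to its starting point. This is what makes a detour
recognisable in a self-avoiding word: such a return cannot occur where no detour was made. -/
structure Detour (π : Γ →* Q) (S : Finset Γ) extends Patch π S where
  exists_return : ∃ i, 0 < i ∧ i ≤ new.length ∧ π (prefixProd new i) = 1

/-- A word over `S` some of whose letters are marked with the label of a detour, to be made just
before that letter. -/
abbrev MarkedWord (ι : Type*) (S : Finset Γ) := List (Option ι × S)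

variable {π : Γ →* Q} {S : Finset Γ} {ι : Type*} (D : ι → Detour π S)

/-- The patch attached to a mark; unmarked letters get the trivial patch. -/
def patchAt : Option ι → Patch π S
  | none => .trivial π S
  | some i => (D i).toPatch

namespace MarkedWord

/-- The word over `S` in which all the marked detours are made. -/
def lift (x : MarkedWord ι S) : List Γ := x.flatMap fun p => (patchAt D p.1).new ++ [p.2.1]

/-- The word in `Q` from which the marked word arises by replacing factors by detours. -/
def base (x : MarkedWord ι S) : List Q := x.flatMap fun p => (patchAt D p.1).old ++ [π p.2]

/-- The sequence of marks. -/
def marks (x : MarkedWord ι S) : List ι := x.filterMap Prod.fst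

/-- The union of the translated regions of all the patches of a marked word, and its endpoint. -/
def region : MarkedWord ι S → Set Q
  | [] => {1}
  | (o, s) :: x => (patchAt D o).region ∪ ((patchAt D o).old.prod * π s) • region x

/-- A marked word is admissible if the translated regions of its patches are disjoint. -/
def Admissible : MarkedWord ι S → Prop
  | [] => True
  | (o, s) :: x =>
    Disjoint (patchAt D o).region (((patchAt D o).old.prod * π s) • region D x) ∧ Admissible x

variable {D}

@[simp] theorem lift_cons (o : Option ι) (s : S) (x : MarkedWord ι S) :
    lift D ((o, s) :: x) = (patchAt D o).new ++ [(s : Γ)] ++ lift D x := by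
  simp [lift]

@[simp] theorem base_cons (o : Option ι) (s : S) (x : MarkedWord ι S) :
    base D ((o, s) :: x) = (patchAt D o).old ++ [π s] ++ base D x := by
  simp [base]

theorem mem_alphabet_of_mem_lift {x : MarkedWord ι S} {a : Γ} (ha : a ∈ lift D x) : a ∈ S := by
  obtain ⟨p, -, hp⟩ := List.mem_flatMap.1 ha
  rcases List.mem_append.1 hp with h | h
  · exact (patchAt D p.1).mem_alphabet a h
  · exact List.mem_singleton.1 h ▸ p.2.2

theorem map_prod_new_append (o : Option ι) (s : S) :
    π ((patchAt D o).new ++ [(s : Γ)]).prod = (patchAt D o).old.prod * π s := by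
  rw [List.prod_append, List.prod_singleton, map_mul, (patchAt D o).map_prod_new]

theorem map_prefixProd_lift_mem_region (x : MarkedWord ι S) (j : ℕ) :
    π (prefixProd (lift D x) j) ∈ region D x := by
  induction x generalizing j with
  | nil => simp [lift, region, prefixProd]
  | cons p x ih =>
    obtain ⟨o, s⟩ := p
    rw [lift_cons]
    rcases le_or_gt ((patchAt D o).new ++ [(s : Γ)]).length j with hj | hj
    · obtain ⟨j, rfl⟩ := Nat.exists_eq_add_of_le hj
      rw [prefixProd_append_length_add, map_mul, map_prod_new_append]
      exact .inr (Set.smul_mem_smul_set (ih j))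
    · rw [prefixProd_append_of_le hj.le,
        prefixProd_append_of_le (by simpa [Nat.lt_succ_iff] using hj)]
      exact .inl ((patchAt D o).map_prefixProd_new_mem j)

theorem Admissible.isSAW_lift {x : MarkedWord ι S} (hx : Admissible D x) : IsSAW (lift D x) := by
  induction x with
  | nil => exact isSAW_nil
  | cons p x ih =>
    obtain ⟨o, s⟩ := p
    have hpre : ∀ i < ((patchAt D o).new ++ [(s : Γ)]).length, i ≤ (patchAt D o).new.length ∧
        prefixProd ((patchAt D o).new ++ [(s : Γ)]) i = prefixProd (patchAt D o).new i := by
      intro i hi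
      rw [List.length_append, List.length_singleton, Nat.lt_succ_iff] at hi
      exact ⟨hi, prefixProd_append_of_le hi _⟩
    rw [lift_cons]
    refine isSAW_append (fun i hi j hj hij => ?_) (ih hx.2) fun i hi j _ heq => ?_
    · rw [(hpre i hi).2, (hpre j hj).2] at hij
      exact (patchAt D o).isSAW_new (hpre i hi).1 (hpre j hj).1 hij
    · refine Set.disjoint_left.1 hx.1 ((patchAt D o).map_prefixProd_new_mem i) ?_
      rw [← (hpre i hi).2, heq, map_mul, map_prod_new_append]
      exact Set.smul_mem_smul_set (map_prefixProd_lift_mem_region x j)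

theorem Admissible.lift_mem_saws {x : MarkedWord ι S} (hx : Admissible D x) :
    lift D x ∈ saws S (lift D x).length :=
  mem_saws.2 ⟨rfl, fun _ => mem_alphabet_of_mem_lift, hx.isSAW_lift⟩

theorem lift_cons_some_ne {i : ι} {s s' : S} {x y : MarkedWord ι S}
    (hy : Admissible D ((none, s') :: y)) :
    lift D ((some i, s) :: x) ≠ lift D ((none, s') :: y) := by
  intro h
  obtain ⟨j, hj0, hj, hreturn⟩ := (D i).exists_return
  obtain ⟨j, rfl⟩ := Nat.exists_eq_add_of_lt hj0
  refine Set.disjoint_left.1 hy.1 (Set.mem_singleton (1 : Q)) ?_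
  have hlift : (D i).new ++ (s : Γ) :: lift D x = (s' : Γ) :: lift D y := by
    simpa [patchAt] using h
  have hprefix : prefixProd (D i).new (0 + j + 1) = s' * prefixProd (lift D y) j := by
    rw [← prefixProd_append_of_le hj (s :: lift D x), hlift, zero_add, prefixProd_cons_succ]
  rw [← hreturn, hprefix, map_mul]
  simp only [patchAt, Patch.trivial_old, List.prod_nil, one_mul]
  exact Set.smul_mem_smul_set (map_prefixProd_lift_mem_region y j)

theorem Admissible.ext {x y : MarkedWord ι S} (hx : Admissible D x) (hy : Admissible D y)
    (hlift : lift D x = lift D y) (hmarks : marks x = marks y) : x = y := by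
  induction x generalizing y with
  | nil =>
    cases y with
    | nil => rfl
    | cons q y => simp [lift] at hlift
  | cons p x ih =>
    cases y with
    | nil => simp [lift] at hlift
    | cons q y =>
      obtain ⟨o, s⟩ := p
      obtain ⟨o', s'⟩ := q
      have hmark : o = o' := by
        rcases o with _ | i <;> rcases o' with _ | i'
        · rfl
        · exact absurd hlift.symm (lift_cons_some_ne hx)
        · exact absurd hlift (lift_cons_some_ne hy)
        · simp_all [marks]
      subst hmark
      rw [lift_cons, lift_cons, List.append_assoc, List.append_assoc] at hlift
      obtain ⟨hs, hlift⟩ := List.cons.inj (List.append_cancel_left hlift)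
      have htail : marks x = marks y := by cases o <;> simp_all [marks]
      rw [ih hx.2 hy.2 hlift htail, Subtype.ext hs]

theorem length_lift_le {Λ : ℕ} (hΛ : ∀ i, (D i).new.length ≤ Λ) (x : MarkedWord ι S) :
    (lift D x).length ≤ (base D x).length + Λ * (marks x).length := by
  induction x with
  | nil => simp [lift]
  | cons p x ih =>
    obtain ⟨o, s⟩ := p
    have hlift : (lift D ((o, s) :: x)).length =
        (patchAt D o).new.length + 1 + (lift D x).length := by
      rw [lift_cons, List.length_append, List.length_append, List.length_singleton]
    have hbase : (base D ((o, s) :: x)).length =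
        (patchAt D o).old.length + 1 + (base D x).length := by
      rw [base_cons, List.length_append, List.length_append, List.length_singleton]
    cases o with
    | none =>
      have hnew : (patchAt D none).new.length = 0 := rfl
      have hmarks : marks ((none, s) :: x) = marks x := rfl
      rw [hmarks]
      omega
    | some i =>
      have hnew : (patchAt D (some i)).new.length ≤ Λ := hΛ i
      have hmarks : marks ((some i, s) :: x) = i :: marks x := rfl
      rw [hmarks, List.length_cons, Nat.mul_succ]
      omega

theorem sum_pow_marks_image_cons_none {α : Type*} {A : Finset α} (X : Finset (MarkedWord ι A))
    (a : A) (t : ℝ) :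
    ∑ x ∈ X.image ((none, a) :: ·), t ^ (marks x).length = ∑ x ∈ X, t ^ (marks x).length := by
  rw [Finset.sum_image List.cons_injective.injOn]
  simp [marks]

theorem sum_pow_marks_image_cons_some {α : Type*} {A : Finset α} (X : Finset (MarkedWord ι A))
    (i : ι) (a : A) (t : ℝ) :
    ∑ x ∈ X.image ((some i, a) :: ·), t ^ (marks x).length =
      t * ∑ x ∈ X, t ^ (marks x).length := by
  rw [Finset.sum_image List.cons_injective.injOn, Finset.mul_sum]
  simp [marks, pow_succ']

end MarkedWord

theorem sum_pow_length_le_tsum {α : Type*} {V : Finset (List α)} {F : ℕ → Finset (List α)}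
    (hV : ∀ v ∈ V, v ∈ F v.length) {z : ℝ} (hz : 0 ≤ z)
    (hF : Summable fun n => (F n).card * z ^ n) :
    ∑ v ∈ V, z ^ v.length ≤ ∑' n, (F n).card * z ^ n := by
  calc ∑ v ∈ V, z ^ v.length
    _ = ∑ n ∈ V.image List.length, ∑ v ∈ V with v.length = n, z ^ n := by
        rw [← Finset.sum_fiberwise_of_maps_to fun v => Finset.mem_image_of_mem List.length]
        refine Finset.sum_congr rfl fun n _ => Finset.sum_congr rfl fun v hv => ?_
        rw [(Finset.mem_filter.1 hv).2]
    _ ≤ ∑ n ∈ V.image List.length, (F n).card * z ^ n := by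
        refine Finset.sum_le_sum fun n _ => ?_
        rw [Finset.sum_const, nsmul_eq_mul]
        gcongr
        intro v hv
        obtain ⟨hvV, rfl⟩ := Finset.mem_filter.1 hv
        exact hV v hvV
    _ ≤ ∑' n, (F n).card * z ^ n := hF.sum_le_tsum _ fun n _ => by positivity

theorem exists_sum_admissible_le [Fintype ι] {z t : ℝ} (hz : 0 ≤ z) (ht : 0 ≤ t)
    (hsaws : Summable fun n => (saws S n).card * z ^ n) (hι : Fintype.card ι * t < 1) :
    ∃ A, ∀ X : Finset (MarkedWord ι S), (∀ x ∈ X, x.Admissible D) →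
      ∑ x ∈ X, z ^ (x.lift D).length * t ^ x.marks.length ≤ A := by
  have hwords : Summable fun n => ((words (Finset.univ : Finset ι) n).card : ℝ) * t ^ n := by
    simpa [card_words, mul_pow] using summable_geometric_of_lt_one (by positivity) hι
  refine ⟨(∑' n, (saws S n).card * z ^ n) *
    ∑' n, ((words (Finset.univ : Finset ι) n).card : ℝ) * t ^ n, fun X hX => ?_⟩
  have hinj : Set.InjOn (fun x : MarkedWord ι S => (x.lift D, x.marks)) X := by
    intro x hx y hy h
    obtain ⟨hlift, hmarks⟩ := Prod.mk.inj h
    exact (hX x hx).ext (hX y hy) hlift hmarks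
  calc ∑ x ∈ X, z ^ (x.lift D).length * t ^ x.marks.length
    _ = ∑ p ∈ X.image fun x => (x.lift D, x.marks), z ^ p.1.length * t ^ p.2.length :=
        (Finset.sum_image hinj (f := fun p => z ^ p.1.length * t ^ p.2.length)).symm
    _ ≤ ∑ p ∈ X.image (MarkedWord.lift D) ×ˢ X.image MarkedWord.marks,
          z ^ p.1.length * t ^ p.2.length := by
        refine Finset.sum_le_sum_of_subset_of_nonneg ?_ fun _ _ _ => by positivity
        rw [Finset.image_subset_iff]
        exact fun x hx => Finset.mem_product.2
          ⟨Finset.mem_image_of_mem _ hx, Finset.mem_image_of_mem _ hx⟩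
    _ = (∑ v ∈ X.image (MarkedWord.lift D), z ^ v.length) *
          ∑ d ∈ X.image MarkedWord.marks, t ^ d.length := by
        rw [Finset.sum_mul_sum, ← Finset.sum_product']
    _ ≤ _ := by
        refine mul_le_mul (sum_pow_length_le_tsum ?_ hz hsaws) (sum_pow_length_le_tsum ?_ ht hwords)
          (Finset.sum_nonneg fun _ _ => by positivity) (tsum_nonneg fun _ => by positivity)
        · intro v hv
          obtain ⟨x, hx, rfl⟩ := Finset.mem_image.1 hv
          exact (hX x hx).lift_mem_saws
        · exact fun d _ => mem_words.2 ⟨rfl, fun i _ => Finset.mem_univ i⟩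

end Detours

section Surgery

variable {Γ Q : Type*} [Group Γ] [Group Q] {π : Γ →* Q} {S : Finset Γ} {ι : Type*}

/-- A place where a detour can be made in the word `w`: the factor of `w` between the times `first`
and `last` is the one replaced by the detour with the given label, and `w` visits the region of the
detour, translated to the starting point, only between these times. -/
structure Site (D : ι → Detour π S) (w : List Q) where
  first : ℕ
  last : ℕ
  label : ι
  first_le_last : first ≤ last
  last_lt : last < w.length
  old_eq : (D label).old = (w.drop first).take (last - first)
  mem_Icc_of_visit : ∀ j ≤ w.length,
    prefixProd w j ∈ prefixProd w first • (D label).region → j ∈ Set.Icc first last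

variable {D : ι → Detour π S} {w : List Q}

namespace Site

/-- The translated region of the detour made at a site. -/
def zone (σ : Site D w) : Set Q := prefixProd w σ.first • (D σ.label).region

/-- Two sites are separated if both detours can be made without interfering. -/
def Separated (σ τ : Site D w) : Prop :=
  (σ.last < τ.first ∨ τ.last < σ.first) ∧ Disjoint σ.zone τ.zone

theorem prefixProd_first_mul_old (σ : Site D w) :
    prefixProd w σ.first * (D σ.label).old.prod = prefixProd w σ.last := by
  rw [σ.old_eq, ← prefixProd, ← prefixProd_add, Nat.add_sub_cancel' σ.first_le_last]

theorem prefixProd_notMem_zone (σ : Site D w) {j : ℕ} (hj : j ≤ w.length)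
    (h : j < σ.first ∨ σ.last < j) : prefixProd w j ∉ σ.zone := fun hmem => by
  have := σ.mem_Icc_of_visit j hj hmem
  rw [Set.mem_Icc] at this
  omega

end Site

/-- The sites of `I` that start at time `p` or later. -/
noncomputable def sitesFrom (I : Finset (Site D w)) (p : ℕ) : Finset (Site D w) :=
  I.filter (p ≤ ·.first)

variable {I : Finset (Site D w)} {p : ℕ}

theorem mem_sitesFrom {σ : Site D w} : σ ∈ sitesFrom I p ↔ σ ∈ I ∧ p ≤ σ.first :=
  Finset.mem_filter

theorem sitesFrom_length_eq_empty (I : Finset (Site D w)) : sitesFrom I w.length = ∅ :=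
  Finset.filter_eq_empty_iff.2 fun σ _ => (σ.first_le_last.trans_lt σ.last_lt).not_ge

theorem sitesFrom_succ_of_forall_ne (h : ∀ σ ∈ I, σ.first ≠ p) :
    sitesFrom I (p + 1) = sitesFrom I p :=
  Finset.filter_congr fun σ hσ => ⟨Nat.le_of_succ_le, fun hp => lt_of_le_of_ne hp (h σ hσ).symm⟩

theorem sitesFrom_first (hI : (I : Set (Site D w)).Pairwise Site.Separated) {σ : Site D w}
    (hσ : σ ∈ I) : sitesFrom I σ.first = insert σ (sitesFrom I (σ.last + 1)) := by
  ext τ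
  have hfirst := σ.first_le_last
  have hlast := τ.first_le_last
  rw [Finset.mem_insert, mem_sitesFrom, mem_sitesFrom]
  by_cases hτ : τ = σ
  · simp [hτ, hσ]
  · simp only [hτ, false_or]
    refine and_congr_right fun hτI => ?_
    have := (hI hσ hτI (Ne.symm hτ)).1
    omega

theorem sitesFrom_first_succ (hI : (I : Set (Site D w)).Pairwise Site.Separated) {σ : Site D w}
    (hσ : σ ∈ I) : sitesFrom I (σ.first + 1) = sitesFrom I (σ.last + 1) := by
  ext τ
  have hfirst := σ.first_le_last
  have hlast := τ.first_le_last
  rw [mem_sitesFrom, mem_sitesFrom]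
  refine and_congr_right fun hτI => ?_
  obtain rfl | hτ := eq_or_ne τ σ
  · omega
  · have := (hI hσ hτI hτ.symm).1
    omega

/-- The points visited by `w` from time `p` on, or possibly visited by detours made from then on. -/
def future (I : Finset (Site D w)) (p : ℕ) : Set Q :=
  prefixProd w '' Set.Icc p w.length ∪ ⋃ σ ∈ sitesFrom I p, σ.zone

theorem future_anti {p' : ℕ} (h : p ≤ p') : future I p' ⊆ future I p :=
  Set.union_subset_union (Set.image_mono (Set.Icc_subset_Icc_left h))
    (Set.biUnion_mono (fun _ hσ => mem_sitesFrom.2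
      ⟨(mem_sitesFrom.1 hσ).1, h.trans (mem_sitesFrom.1 hσ).2⟩) fun _ _ => subset_rfl)

theorem disjoint_singleton_future (hw : IsSAW w) (hp : p < w.length) :
    Disjoint {prefixProd w p} (future I (p + 1)) := by
  rw [Set.disjoint_singleton_left, future, Set.mem_union, not_or]
  constructor
  · rintro ⟨j, hj, heq⟩
    have := hw hj.2 hp.le heq
    exact (Nat.lt_of_succ_le hj.1).ne' this
  · simp only [Set.mem_iUnion, not_exists]
    exact fun σ hσ => σ.prefixProd_notMem_zone hp.le (.inl (mem_sitesFrom.1 hσ).2)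

theorem Site.disjoint_zone_future (hI : (I : Set (Site D w)).Pairwise Site.Separated)
    {σ : Site D w} (hσ : σ ∈ I) : Disjoint σ.zone (future I (σ.last + 1)) := by
  refine Set.disjoint_union_right.2 ⟨?_, Set.disjoint_iUnion₂_right.2 fun τ hτ => ?_⟩
  · rw [Set.disjoint_right]
    rintro _ ⟨j, hj, rfl⟩
    exact σ.prefixProd_notMem_zone hj.2 (.inr hj.1)
  · obtain ⟨hτI, hlast⟩ := mem_sitesFrom.1 hτ
    refine (hI hσ hτI ?_).2
    rintro rfl
    have := σ.first_le_last
    omega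

/-- The marked word `x` arises from the word `w`, from time `p` on, by marking detours that can be
made simultaneously. -/
structure IsMarkingFrom (I : Finset (Site D w)) (p : ℕ) (x : MarkedWord ι S) : Prop where
  base_eq : x.base D = w.drop p
  admissible : x.Admissible D
  region_subset : prefixProd w p • x.region D ⊆ future I p

namespace IsMarkingFrom

variable {x : MarkedWord ι S} {s : S}

theorem nil (I : Finset (Site D w)) : IsMarkingFrom I w.length [] where
  base_eq := by simp [MarkedWord.base]
  admissible := True.intro
  region_subset := by simp [MarkedWord.region, future]

theorem cons {p' : ℕ} {o : Option ι} (hx : IsMarkingFrom I p' x) (hp : p ≤ p')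
    (hbase : (patchAt D o).old ++ [π s] ++ w.drop p' = w.drop p)
    (hprod : prefixProd w p * ((patchAt D o).old.prod * π s) = prefixProd w p')
    (hdisj : Disjoint (prefixProd w p • (patchAt D o).region) (future I p'))
    (hsub : prefixProd w p • (patchAt D o).region ⊆ future I p) :
    IsMarkingFrom I p ((o, s) :: x) := by
  have htail : prefixProd w p • ((patchAt D o).old.prod * π s) • x.region D ⊆ future I p' := by
    rw [← mul_smul, hprod]
    exact hx.region_subset
  refine ⟨by rw [MarkedWord.base_cons, hx.base_eq, hbase], ⟨?_, hx.admissible⟩, ?_⟩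
  · exact Set.disjoint_smul_set.1 (hdisj.mono_right htail)
  · rw [MarkedWord.region, Set.smul_set_union]
    exact Set.union_subset hsub (htail.trans (future_anti hp))

theorem cons_none (hx : IsMarkingFrom I (p + 1) x) (hw : IsSAW w) (hp : p < w.length)
    (hs : π s = w[p]) : IsMarkingFrom I p ((none, s) :: x) := by
  refine hx.cons p.le_succ ?_ ?_ ?_ ?_
  · simp [patchAt, hs]
  · simp [patchAt, hs, prefixProd, List.prod_take_succ w p hp]
  · simpa [patchAt] using disjoint_singleton_future hw hp
  · have : prefixProd w p ∈ future I p := .inl ⟨p, ⟨le_rfl, hp.le⟩, rfl⟩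
    simpa [patchAt] using this

theorem cons_some (hI : (I : Set (Site D w)).Pairwise Site.Separated) {σ : Site D w} (hσ : σ ∈ I)
    (hx : IsMarkingFrom I (σ.last + 1) x) (hs : π s = w[σ.last]'σ.last_lt) :
    IsMarkingFrom I σ.first ((some σ.label, s) :: x) := by
  have hsub : σ.zone ⊆ future I σ.first := fun q hq =>
    .inr (Set.mem_biUnion (mem_sitesFrom.2 ⟨hσ, le_rfl⟩) hq)
  refine hx.cons (σ.first_le_last.trans (Nat.le_succ _)) ?_ ?_ (σ.disjoint_zone_future hI hσ) hsub
  · have hdrop : π s :: w.drop (σ.last + 1) = (w.drop σ.first).drop (σ.last - σ.first) := by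
      rw [hs, List.cons_getElem_drop_succ, List.drop_drop, Nat.add_sub_cancel' σ.first_le_last]
    rw [patchAt, σ.old_eq, List.append_assoc, List.singleton_append, hdrop,
      List.take_append_drop]
  · rw [patchAt, ← mul_assoc, σ.prefixProd_first_mul_old, hs, prefixProd, prefixProd,
      List.prod_take_succ w σ.last σ.last_lt]

end IsMarkingFrom

theorem exists_isMarkingFrom (hw : IsSAW w) (halph : ∀ q ∈ w, q ∈ S.image π)
    (hI : (I : Set (Site D w)).Pairwise Site.Separated) {t : ℝ} (ht : 0 ≤ t) (hp : p ≤ w.length) :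
    ∃ X : Finset (MarkedWord ι S), (∀ x ∈ X, IsMarkingFrom I p x) ∧
      (1 + t) ^ (sitesFrom I p).card ≤ ∑ x ∈ X, t ^ x.marks.length := by
  have hletter : ∀ j (hj : j < w.length), ∃ s : S, π s = w[j] := fun j hj => by
    obtain ⟨s, hs, heq⟩ := Finset.mem_image.1 (halph _ (List.getElem_mem hj))
    exact ⟨⟨s, hs⟩, heq⟩
  induction hn : w.length - p using Nat.strong_induction_on generalizing p with
  | _ n ih =>
    obtain rfl | hp := hp.eq_or_lt
    · exact ⟨{[]}, by simpa using IsMarkingFrom.nil I,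
        by simp [sitesFrom_length_eq_empty, MarkedWord.marks]⟩
    obtain ⟨s, hs⟩ := hletter p hp
    obtain ⟨X, hX, hXsum⟩ := ih _ (by omega) (Nat.succ_le_of_lt hp) rfl
    have hskip : ∀ x ∈ X.image ((none, s) :: ·), IsMarkingFrom I p x :=
      Finset.forall_mem_image.2 fun x hx => (hX x hx).cons_none hw hp hs
    by_cases hsite : ∃ σ ∈ I, σ.first = p
    · obtain ⟨σ, hσ, rfl⟩ := hsite
      obtain ⟨s', hs'⟩ := hletter σ.last σ.last_lt
      have := σ.first_le_last
      obtain ⟨Y, hY, hYsum⟩ := ih _ (by omega) (Nat.succ_le_of_lt σ.last_lt) rfl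
      have hmark : ∀ x ∈ Y.image ((some σ.label, s') :: ·), IsMarkingFrom I σ.first x :=
        Finset.forall_mem_image.2 fun x hx => (hY x hx).cons_some hI hσ hs'
      have hdisj : Disjoint (X.image ((none, s) :: ·)) (Y.image ((some σ.label, s') :: ·)) := by
        simp [Finset.disjoint_left]
      refine ⟨X.image ((none, s) :: ·) ∪ Y.image ((some σ.label, s') :: ·),
        fun x hx => (Finset.mem_union.1 hx).elim (hskip x) (hmark x), ?_⟩
      have hσ_notMem : σ ∉ sitesFrom I (σ.last + 1) := fun h => by
        have := (mem_sitesFrom.1 h).2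
        omega
      rw [sitesFrom_first_succ hI hσ] at hXsum
      rw [Finset.sum_union hdisj, MarkedWord.sum_pow_marks_image_cons_none,
        MarkedWord.sum_pow_marks_image_cons_some, sitesFrom_first hI hσ,
        Finset.card_insert_of_notMem hσ_notMem, pow_succ', add_mul, one_mul]
      gcongr
    · push Not at hsite
      exact ⟨_, hskip, by
        rwa [MarkedWord.sum_pow_marks_image_cons_none, ← sitesFrom_succ_of_forall_ne hsite]⟩

/-- The word `w` has at least `c` pairwise separated sites. -/
def HasSites (D : ι → Detour π S) (c : ℝ) (w : List Q) : Prop :=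
  ∃ I : Finset (Site D w), (I : Set (Site D w)).Pairwise Site.Separated ∧ c ≤ I.card

theorem exists_sum_pow_marks_ge {n : ℕ} (hw : w ∈ saws (S.image π) n) {c : ℝ}
    (hc : HasSites D c w) {t : ℝ} (ht : 0 ≤ t) :
    ∃ X : Finset (MarkedWord ι S), (∀ x ∈ X, x.base D = w ∧ x.Admissible D) ∧
      (1 + t) ^ c ≤ ∑ x ∈ X, t ^ x.marks.length := by
  obtain ⟨-, halph, hsaw⟩ := mem_saws.1 hw
  obtain ⟨I, hI, hcI⟩ := hc
  obtain ⟨X, hX, hsum⟩ := exists_isMarkingFrom hsaw halph hI ht (Nat.zero_le _)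
  refine ⟨X, fun x hx => ⟨(hX x hx).base_eq, (hX x hx).admissible⟩, le_trans ?_ hsum⟩
  rw [sitesFrom, Finset.filter_true_of_mem fun _ _ => Nat.zero_le _, ← Real.rpow_natCast]
  exact Real.rpow_le_rpow_of_exponent_le (le_add_of_nonneg_right ht) hcI

theorem exists_card_mul_pow_mul_rpow_le [Fintype ι] {Λ : ℕ}
    (hΛ : ∀ i, (D i).new.length ≤ Λ) {z t : ℝ} (hz : 0 < z) (hz1 : z ≤ 1) (ht : 0 ≤ t)
    (hsaws : Summable fun n => (saws S n).card * z ^ n) (hι : Fintype.card ι * t < 1) :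
    ∃ A, ∀ n c, ((saws (S.image π) n).filter (HasSites D c)).card *
      (z ^ n * (1 + t * z ^ Λ) ^ c) ≤ A := by
  obtain ⟨A, hA⟩ := exists_sum_admissible_le D hz.le ht hsaws hι
  refine ⟨A, fun n c => ?_⟩
  set F := (saws (S.image π) n).filter (HasSites D c)
  have hF : ∀ w ∈ F, ∃ X : Finset (MarkedWord ι S), (∀ x ∈ X, x.base D = w ∧ x.Admissible D) ∧
      (1 + t * z ^ Λ) ^ c ≤ ∑ x ∈ X, (t * z ^ Λ) ^ x.marks.length := fun w hw =>
    exists_sum_pow_marks_ge (Finset.mem_filter.1 hw).1 (Finset.mem_filter.1 hw).2 (by positivity)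
  choose! X hX hXsum using hF
  have hdisj : (F : Set (List Q)).PairwiseDisjoint X := fun v hv w hw hvw =>
    Finset.disjoint_left.2 fun x hxv hxw => hvw ((hX v hv x hxv).1.symm.trans (hX w hw x hxw).1)
  have hweight : ∀ w ∈ F, ∀ x ∈ X w, z ^ n * (t * z ^ Λ) ^ x.marks.length ≤
      z ^ (x.lift D).length * t ^ x.marks.length := by
    intro w hw x hx
    have hlen := MarkedWord.length_lift_le hΛ x
    rw [(hX w hw x hx).1, (mem_saws.1 (Finset.mem_filter.1 hw).1).1] at hlen
    calc z ^ n * (t * z ^ Λ) ^ x.marks.length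
      _ = z ^ (n + Λ * x.marks.length) * t ^ x.marks.length := by
          rw [mul_pow, pow_add, pow_mul]; ring
      _ ≤ z ^ (x.lift D).length * t ^ x.marks.length := by
          exact mul_le_mul_of_nonneg_right (pow_le_pow_of_le_one hz.le hz1 hlen) (by positivity)
  calc F.card * (z ^ n * (1 + t * z ^ Λ) ^ c)
    _ = ∑ w ∈ F, z ^ n * (1 + t * z ^ Λ) ^ c := by rw [Finset.sum_const, nsmul_eq_mul]
    _ ≤ ∑ w ∈ F, ∑ x ∈ X w, z ^ (x.lift D).length * t ^ x.marks.length := by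
        refine Finset.sum_le_sum fun w hw => ?_
        refine le_trans ?_ (Finset.sum_le_sum (hweight w hw))
        rw [← Finset.mul_sum]
        gcongr
        exact hXsum w hw
    _ = ∑ x ∈ F.biUnion X, z ^ (x.lift D).length * t ^ x.marks.length :=
        (Finset.sum_biUnion hdisj).symm
    _ ≤ A := hA _ fun x hx => by
        obtain ⟨w, hw, hx⟩ := Finset.mem_biUnion.1 hx
        exact (hX w hw x hx).2

theorem growthLT_card_hasSites [Finite ι] {μ : ℝ}
    (hμ : Tendsto (fun n : ℕ => ((saws S n).card : ℝ) ^ (1 / (n : ℝ))) atTop (nhds μ))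
    (hμ1 : 1 ≤ μ) (D : ι → Detour π S) {δ : ℝ} (hδ : 0 < δ) :
    GrowthLT (fun n => ((saws (S.image π) n).filter (HasSites D (δ * n))).card) μ := by
  have := Fintype.ofFinite ι
  obtain ⟨Λ, hΛ⟩ : ∃ Λ, ∀ i, (D i).new.length ≤ Λ :=
    ⟨Finset.univ.sup fun i => (D i).new.length, fun i =>
      Finset.le_sup (f := fun i => (D i).new.length) (Finset.mem_univ i)⟩
  have hμ0 : 0 < μ := one_pos.trans_le hμ1
  set t : ℝ := (Fintype.card ι + 1)⁻¹
  have hι : Fintype.card ι * t < 1 := by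
    rw [← div_eq_mul_inv, div_lt_one (by positivity)]
    exact lt_add_one _
  set b : ℝ := 1 + t * (2 * μ)⁻¹ ^ Λ
  have hb : 1 < b ^ δ := Real.one_lt_rpow (lt_add_of_pos_right _ (by positivity)) hδ
  obtain ⟨y, hμy, hy⟩ : ∃ y, μ < y ∧ y < min (2 * μ) (μ * b ^ δ) :=
    exists_between (lt_min (by linarith) (lt_mul_of_one_lt_right hμ0 hb))
  obtain ⟨hy2, hyb⟩ := lt_min_iff.1 hy
  have hy0 : 0 < y := hμ0.trans hμy
  obtain ⟨A, hA⟩ := exists_card_mul_pow_mul_rpow_le hΛ (inv_pos.2 hy0)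
    (inv_le_one_of_one_le₀ (hμ1.trans hμy.le)) (by positivity : 0 ≤ t)
    (summable_mul_inv_pow_of_tendsto_rpow (fun _ => Nat.cast_nonneg _) hμ hμ0 hμy) hι
  refine growthLT_of_le (C := A) (y := y / b ^ δ) (fun _ => Nat.cast_nonneg _) (by positivity)
    ((div_lt_iff₀ (by positivity)).2 hyb) fun n => ?_
  have hbz : b ≤ 1 + t * y⁻¹ ^ Λ := by
    simp only [b]
    gcongr
  have hle : ((saws (S.image π) n).filter (HasSites D (δ * n))).card *
      (y⁻¹ ^ n * (b ^ δ) ^ n) ≤ A := by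
    refine le_trans ?_ (hA n (δ * n))
    rw [← Real.rpow_mul_natCast (by positivity)]
    gcongr
  rw [← mul_pow, inv_mul_eq_div] at hle
  rw [← inv_div, inv_pow, ← div_eq_mul_inv, le_div_iff₀ (by positivity)]
  exact hle

end Surgery

section Loops

theorem exists_shorter_sublist {M : Type*} [Monoid M] {l : List M} {i j : ℕ} (hij : i < j)
    (hj : j ≤ l.length) (h : prefixProd l i = prefixProd l j) :
    ∃ l' : List M, l'.Sublist l ∧ l'.length < l.length ∧ l'.prod = l.prod := by
  refine ⟨l.take i ++ l.drop j, ?_, ?_, ?_⟩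
  · conv_rhs => rw [← List.take_append_drop j l]
    exact (List.take_sublist_take_left hij.le).append (List.Sublist.refl _)
  · rw [List.length_append, List.length_take, List.length_drop]
    omega
  · rw [List.prod_append, ← prefixProd, h, prefixProd, List.prod_take_mul_prod_drop]

theorem exists_isSAW_prod_eq {M : Type*} [Monoid M] {S : Set M} (hS : Submonoid.closure S = ⊤)
    (x : M) : ∃ l : List M, (∀ y ∈ l, y ∈ S) ∧ IsSAW l ∧ l.prod = x := by
  have hword : ∃ l : List M, (∀ y ∈ l, y ∈ S) ∧ l.prod = x :=
    Submonoid.exists_list_of_mem_closure (hS ▸ Submonoid.mem_top x)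
  obtain ⟨l, ⟨hl, hprod⟩, hmin⟩ :=
    exists_minimalFor_of_wellFoundedLT _ (List.length (α := M)) hword
  have hne : ∀ i j, i < j → j ≤ l.length → prefixProd l i ≠ prefixProd l j := by
    intro i j hij hj heq
    obtain ⟨l', hsub, hlt, hprod'⟩ := exists_shorter_sublist hij hj heq
    exact hlt.not_ge (hmin ⟨fun y hy => hl y (hsub.subset hy), hprod'.trans hprod⟩ hlt.le)
  exact ⟨l, hl, Set.injOn_iff_injective.2 (.of_lt_imp_ne fun i j hij =>
    hne i j hij j.2), hprod⟩

theorem saws_nonempty {M : Type*} [Monoid M] [Infinite M] {S : Finset M}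
    (hS : Submonoid.closure (S : Set M) = ⊤) (n : ℕ) : (saws S n).Nonempty := by
  by_contra hn
  suffices h : (Set.univ : Set M) ⊆ ((Finset.range n).biUnion (words S)).image List.prod from
    Set.infinite_univ ((Finset.finite_toSet _).subset h)
  intro x _
  obtain ⟨l, hl, hsaw, rfl⟩ := exists_isSAW_prod_eq hS x
  refine Finset.mem_image_of_mem _ (Finset.mem_biUnion.2 ⟨l.length, ?_, mem_words.2 ⟨rfl, hl⟩⟩)
  by_contra hlen
  have hlen : n + (l.length - n) = l.length := by
    rw [Finset.mem_range] at hlen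
    omega
  exact hn ⟨_, take_mem_saws (mem_saws.2 ⟨hlen.symm, hl, hsaw⟩)⟩

variable {Γ Q : Type*} [Group Γ] [Group Q] {π : Γ →* Q} {S : Finset Γ} {u : List Γ}

/-- A word over `S` whose product is a nontrivial element of the kernel of `π`. -/
structure IsLoop (π : Γ →* Q) (S : Finset Γ) (u : List Γ) : Prop where
  mem_alphabet : ∀ x ∈ u, x ∈ S
  map_prod : π u.prod = 1
  prod_ne_one : u.prod ≠ 1

/-- A loop of minimal length. The image in `Q` of the walk it spells is a simple cycle. -/
def IsShortestLoop (π : Γ →* Q) (S : Finset Γ) (u : List Γ) : Prop :=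
  MinimalFor (IsLoop π S) List.length u

theorem exists_isShortestLoop (hS : Submonoid.closure (S : Set Γ) = ⊤)
    (hπ : ¬Function.Injective π) : ∃ u, IsShortestLoop π S u := by
  rw [injective_iff_map_eq_one] at hπ
  push Not at hπ
  obtain ⟨x, hx, hx1⟩ := hπ
  obtain ⟨u, hu, -, rfl⟩ := exists_isSAW_prod_eq hS x
  exact exists_minimalFor_of_wellFoundedLT _ _ ⟨u, hu, hx, hx1⟩

theorem IsLoop.length_pos (hu : IsLoop π S u) : 0 < u.length := by
  refine List.length_pos_of_ne_nil ?_
  rintro rfl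
  exact hu.prod_ne_one List.prod_nil

theorem IsLoop.rotate (hu : IsLoop π S u) (a : ℕ) : IsLoop π S (u.rotate a) where
  mem_alphabet x hx := hu.mem_alphabet x (List.mem_rotate.1 hx)
  map_prod := by
    have := hu.map_prod
    rw [map_list_prod] at this
    rw [map_list_prod, List.map_rotate, List.prod_rotate_eq_one_of_prod_eq_one this]
  prod_ne_one h := by
    obtain ⟨b, hb⟩ := (show u ~r u.rotate a from ⟨a, rfl⟩).symm
    exact hu.prod_ne_one (hb ▸ List.prod_rotate_eq_one_of_prod_eq_one h b)

theorem IsShortestLoop.rotate (hu : IsShortestLoop π S u) (a : ℕ) :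
    IsShortestLoop π S (u.rotate a) :=
  ⟨hu.1.rotate a, fun v hv => by simpa only [List.length_rotate] using hu.2 hv⟩

theorem IsShortestLoop.injOn_map_prefixProd (hu : IsShortestLoop π S u) :
    Set.InjOn (fun i => π (prefixProd u i)) (Set.Iio u.length) := by
  have hne : ∀ i j, i < j → j < u.length → π (prefixProd u i) ≠ π (prefixProd u j) := by
    intro i j hij hj heq
    by_cases hpre : prefixProd u i = prefixProd u j
    · obtain ⟨v, hsub, hlt, hprod⟩ := exists_shorter_sublist hij hj.le hpre
      have hv : IsLoop π S v := ⟨fun x hx => hu.1.mem_alphabet x (hsub.subset hx),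
        hprod ▸ hu.1.map_prod, hprod ▸ hu.1.prod_ne_one⟩
      exact hlt.not_ge (hu.2 hv hlt.le)
    · have hfactor : prefixProd u i * ((u.drop i).take (j - i)).prod = prefixProd u j := by
        rw [← prefixProd, ← prefixProd_add, Nat.add_sub_cancel' hij.le]
      have hv : IsLoop π S ((u.drop i).take (j - i)) :=
        { mem_alphabet := fun x hx =>
            hu.1.mem_alphabet x (List.mem_of_mem_drop (List.mem_of_mem_take hx))
          map_prod := by simpa [← hfactor] using heq
          prod_ne_one := fun h => hpre (by rw [← hfactor, h, mul_one]) }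
      have hlt : ((u.drop i).take (j - i)).length < u.length := by
        rw [List.length_take, List.length_drop]
        omega
      exact hlt.not_ge (hu.2 hv hlt.le)
  exact Set.injOn_iff_injective.2 (.of_lt_imp_ne fun i j hij => hne i j hij j.2)

/-- The vertices of the image in `Q` of the closed walk spelled by a loop. -/
noncomputable def loopVertices (π : Γ →* Q) (u : List Γ) : Finset Q :=
  (Finset.range u.length).image fun i => π (prefixProd u i)

theorem IsLoop.one_mem_loopVertices (hu : IsLoop π S u) : 1 ∈ loopVertices π u :=
  Finset.mem_image.2 ⟨0, Finset.mem_range.2 hu.length_pos, by rw [prefixProd_zero, map_one]⟩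

theorem IsLoop.map_prefixProd_mem_loopVertices (hu : IsLoop π S u) (i : ℕ) :
    π (prefixProd u i) ∈ loopVertices π u := by
  rcases lt_or_ge i u.length with hi | hi
  · exact Finset.mem_image_of_mem _ (Finset.mem_range.2 hi)
  · rw [prefixProd_of_length_le hi, hu.map_prod]
    exact hu.one_mem_loopVertices

theorem IsLoop.map_prefixProd_mul_rotate_mem (hu : IsLoop π S u) {a : ℕ} (ha : a < u.length)
    (i : ℕ) : π (prefixProd u a) * π (prefixProd (u.rotate a) i) ∈ loopVertices π u := by
  rw [List.rotate_eq_drop_append_take ha.le, ← map_mul]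
  rcases le_or_gt i (u.drop a).length with hi | hi
  · rw [prefixProd_append_of_le hi, ← prefixProd_add]
    exact hu.map_prefixProd_mem_loopVertices _
  · obtain ⟨j, rfl⟩ := Nat.exists_eq_add_of_lt hi
    rw [add_assoc, prefixProd_append_length_add, prefixProd_take, ← mul_assoc, prefixProd,
      List.prod_take_mul_prod_drop, map_mul, hu.map_prod, one_mul]
    exact hu.map_prefixProd_mem_loopVertices _

theorem IsShortestLoop.exists_map_prefixProd_rotate_eq (hu : IsShortestLoop π S u) {a : ℕ}
    (ha : a < u.length) {x : Q} (hx : π (prefixProd u a) * x ∈ loopVertices π u) :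
    ∃ m < u.length, π (prefixProd (u.rotate a) m) = x := by
  have hsurj := Finset.surjOn_of_injOn_of_card_le (s := Finset.range u.length)
    (t := loopVertices π u) (fun i => π (prefixProd u a) * π (prefixProd (u.rotate a) i))
    (fun i _ => hu.1.map_prefixProd_mul_rotate_mem ha i)
    (fun i hi j hj h => (hu.rotate a).injOn_map_prefixProd (by simpa using hi) (by simpa using hj)
      (mul_left_cancel h))
    Finset.card_image_le
  obtain ⟨m, hm, heq⟩ := hsurj hx
  exact ⟨m, Finset.mem_range.1 hm, mul_left_cancel heq⟩

theorem IsShortestLoop.isSAW_append_take (hu : IsShortestLoop π S u) {m : ℕ} (hm : m < u.length) :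
    IsSAW (u ++ u.take m) := by
  have hinj := hu.injOn_map_prefixProd
  have hinj' : Set.InjOn (prefixProd u) (Set.Iio u.length) :=
    fun i hi j hj h => hinj hi hj (congrArg π h)
  have hlt : ∀ i ≤ (u.take m).length,
      i < u.length ∧ prefixProd (u.take m) i = prefixProd u i := by
    intro i hi
    rw [List.length_take, le_inf_iff] at hi
    exact ⟨hi.1.trans_lt hm, prefixProd_take_of_le hi.1⟩
  refine isSAW_append hinj' (fun i hi j hj h => ?_) fun i hi j hj h => ?_
  · rw [(hlt i hi).2, (hlt j hj).2] at h
    exact hinj' (hlt i hi).1 (hlt j hj).1 h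
  · rw [(hlt j hj).2] at h
    obtain rfl : i = j := hinj hi (hlt j hj).1 (by simp only [h, map_mul, hu.1.map_prod, one_mul])
    exact hu.1.prod_ne_one (right_eq_mul.1 h)

/-- Any word of `Q` that joins two points of `C` can be replaced by a detour through `C`. -/
def HasDetours (π : Γ →* Q) (S : Finset Γ) (C : Finset Q) : Prop :=
  ∀ c ∈ C, ∀ r : List Q, c * r.prod ∈ C →
    ∃ d : Detour π S, d.old = r ∧ d.region = {x | c * x ∈ C}

theorem IsShortestLoop.hasDetours_loopVertices (hu : IsShortestLoop π S u) :
    HasDetours π S (loopVertices π u) := by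
  intro c hc r hr
  obtain ⟨a, ha, rfl⟩ := Finset.mem_image.1 hc
  rw [Finset.mem_range] at ha
  obtain ⟨m, hm, hmr⟩ := hu.exists_map_prefixProd_rotate_eq ha hr
  have hrot := hu.rotate a
  set v := u.rotate a with hv
  rw [← List.length_rotate u a, ← hv] at hm
  -- once around the loop, which is no closed walk in `Γ`, and then along it to the endpoint
  refine ⟨⟨⟨r, v ++ v.take m, {x | π (prefixProd u a) * x ∈ loopVertices π u}, ?_,
    hrot.isSAW_append_take hm, fun j => ?_, ?_⟩, v.length, hrot.1.length_pos, ?_, ?_⟩, rfl, rfl⟩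
  · intro x hx
    rcases List.mem_append.1 hx with hx | hx
    exacts [hrot.1.mem_alphabet x hx, hrot.1.mem_alphabet x (List.mem_of_mem_take hx)]
  · rcases le_or_gt j v.length with hj | hj
    · rw [prefixProd_append_of_le hj]
      exact hu.1.map_prefixProd_mul_rotate_mem ha j
    · obtain ⟨j, rfl⟩ := Nat.exists_eq_add_of_lt hj
      rw [add_assoc, prefixProd_append_length_add, map_mul, hrot.1.map_prod, one_mul,
        prefixProd_take]
      exact hu.1.map_prefixProd_mul_rotate_mem ha _
  · rw [List.prod_append, map_mul, hrot.1.map_prod, one_mul, ← prefixProd, hmr]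
  · simp
  · rw [prefixProd_append_of_le le_rfl, prefixProd_length, hrot.1.map_prod]

theorem exists_hasDetours (hS : Submonoid.closure (S : Set Γ) = ⊤) (hπ : ¬Function.Injective π) :
    ∃ C : Finset Q, 1 ∈ C ∧ HasDetours π S C :=
  let ⟨u, hu⟩ := exists_isShortestLoop hS hπ
  ⟨loopVertices π u, hu.1.one_mem_loopVertices, hu.hasDetours_loopVertices⟩

end Loops

section Main

universe u

variable {Γ ι : Type*} {Q : Type u} [Group Γ] [Group Q] {π : Γ →* Q} {S : Finset Γ} {C : Finset Q}
  {w : List Q}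

/-- The family `D` contains detours through `C` that replace the words over `T` of length at most
`N` joining two points of `C`. -/
def CoversShortWords (D : ι → Detour π S) (C T : Finset Q) (N : ℕ) : Prop :=
  ∀ c ∈ C, ∀ r : List Q, r.length ≤ N → (∀ x ∈ r, x ∈ T) → c * r.prod ∈ C →
    ∃ i, (D i).old = r ∧ (D i).region = {x | c * x ∈ C}

theorem HasDetours.exists_coversShortWords (hC : HasDetours π S C) (T : Finset Q) (N : ℕ) :
    ∃ (ι : Type u) (_ : Finite ι) (D : ι → Detour π S), CoversShortWords D C T N := by
  set P : Finset (Q × List Q) :=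
    (C ×ˢ (Finset.range (N + 1)).biUnion (words T)).filter fun p => p.1 * p.2.prod ∈ C
  have hP : ∀ p : P, ∃ d : Detour π S, d.old = p.1.2 ∧ d.region = {x | p.1.1 * x ∈ C} := fun p =>
    have hp := Finset.mem_filter.1 p.2
    hC _ (Finset.mem_product.1 hp.1).1 _ hp.2
  choose D hD using hP
  refine ⟨P, inferInstance, D, fun c hc r hr hrT hrC => ⟨⟨(c, r), ?_⟩, hD _⟩⟩
  refine Finset.mem_filter.2 ⟨Finset.mem_product.2 ⟨hc, Finset.mem_biUnion.2 ?_⟩, hrC⟩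
  exact ⟨r.length, Finset.mem_range.2 (Nat.lt_succ_of_le hr), mem_words.2 ⟨rfl, hrT⟩⟩

variable {T : Finset Q} {N : ℕ} {D : ι → Detour π S}

theorem CoversShortWords.exists_site (hD : CoversShortWords D C T N) (h1 : 1 ∈ C)
    (hwT : ∀ x ∈ w, x ∈ T) {a i : ℕ} (haN : a + N < w.length) (hi : i ≤ w.length)
    (hvisits : visits C w i ⊆ Finset.Icc a (a + N)) :
    ∃ σ : Site D w, a ≤ σ.first ∧ σ.last ≤ a + N ∧ σ.zone = prefixProd w i • (C : Set Q) := by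
  have hne : (visits C w i).Nonempty := ⟨i, mem_visits.2 ⟨hi, by rwa [inv_mul_cancel]⟩⟩
  set p := (visits C w i).min' hne
  set q := (visits C w i).max' hne
  obtain ⟨hap, -⟩ := Finset.mem_Icc.1 (hvisits (Finset.min'_mem _ hne))
  obtain ⟨-, hqN⟩ := Finset.mem_Icc.1 (hvisits (Finset.max'_mem _ hne))
  have hpq : p ≤ q := Finset.min'_le_max' _ hne
  have hpC := (mem_visits.1 (Finset.min'_mem _ hne)).2
  have hqC := (mem_visits.1 (Finset.max'_mem _ hne)).2
  obtain ⟨d, hold, hregion⟩ := hD _ hpC ((w.drop p).take (q - p))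
    ((List.length_take_le _ _).trans (by omega))
    (fun x hx => hwT x (List.mem_of_mem_drop (List.mem_of_mem_take hx)))
    (by rwa [← prefixProd, mul_assoc, ← prefixProd_add, Nat.add_sub_cancel' hpq])
  have hzone : prefixProd w p • (D d).region = prefixProd w i • (C : Set Q) := by
    ext x
    simp [hregion, Set.mem_smul_set_iff_inv_smul_mem, p]
  refine ⟨⟨p, q, d, hpq, hqN.trans_lt haN, hold, fun j hj hmem => ?_⟩, hap, hqN, hzone⟩
  rw [hzone, Set.mem_smul_set_iff_inv_smul_mem] at hmem
  have hjC : j ∈ visits C w i := mem_visits.2 ⟨hj, hmem⟩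
  exact ⟨Finset.min'_le _ _ hjC, Finset.le_max' _ _ hjC⟩

theorem disjoint_smul_of_notMem_visits {i j : ℕ} (hj : j ≤ w.length)
    (hij : j ∉ visits (C / C) w i) :
    Disjoint (prefixProd w i • (C : Set Q)) (prefixProd w j • (C : Set Q)) := by
  rw [Set.disjoint_left]
  rintro _ ⟨c, hc, rfl⟩ ⟨c', hc', heq⟩
  refine hij (mem_visits.2 ⟨hj, Finset.mem_div.2 ⟨c, hc, c', hc', ?_⟩⟩)
  rw [div_eq_iff_eq_mul, mul_assoc, eq_inv_mul_iff_mul_eq]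
  exact heq.symm

theorem CoversShortWords.exists_site_of_not_isSparse (hD : CoversShortWords D C T N)
    (h1 : 1 ∈ C) {k : ℕ} (hwT : ∀ x ∈ w, x ∈ T) (hw : IsSparse (C / C) (k + 1) w) {a : ℕ}
    (haN : a + N < w.length) (hb : ¬IsSparse (C / C) k ((w.drop a).take N)) :
    ∃ i ∈ Finset.Icc a (a + N), visits (C / C) w i ⊆ Finset.Icc a (a + N) ∧
      ∃ σ : Site D w, a ≤ σ.first ∧ σ.last ≤ a + N ∧ σ.zone = prefixProd w i • (C : Set Q) := by
  obtain ⟨i, hi, hvisits⟩ := hw.exists_visits_subset_Icc haN.le hb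
  have hCsub : C ⊆ C / C := fun x hx => Finset.mem_div.2 ⟨x, hx, 1, h1, div_one x⟩
  exact ⟨i, hi, hvisits, hD.exists_site h1 hwT haN ((Finset.mem_Icc.1 hi).2.trans haN.le)
    ((visits_mono hCsub w i).trans hvisits)⟩

theorem CoversShortWords.hasSites (hD : CoversShortWords D C T N) (h1 : 1 ∈ C) {k : ℕ}
    (hwT : ∀ x ∈ w, x ∈ T) (hw : IsSparse (C / C) (k + 1) w) {c : ℝ}
    (hc : c ≤ (blocksWith (fun b => ¬IsSparse (C / C) k (b.take N)) (N + 1)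
      (w.length / (N + 1)) w).card) :
    HasSites D c w := by
  set J := blocksWith (fun b => ¬IsSparse (C / C) k (b.take N)) (N + 1) (w.length / (N + 1)) w
  have hlen : ∀ j ∈ J, j * (N + 1) + N < w.length := fun _ => mul_add_lt_length_of_mem_blocksWith
  have hsite := fun j : J => hD.exists_site_of_not_isSparse h1 hwT hw (hlen j j.2)
    (by simpa [List.take_take] using (mem_blocksWith.1 j.2).2)
  choose i hi hvisits σ hfirst hlast hzone using hsite
  simp only [Finset.mem_Icc] at hi
  have hblocks : ∀ j j' : J, j ≠ j' →
      j * (N + 1) + N < j' * (N + 1) ∨ (j' : ℕ) * (N + 1) + N < j * (N + 1) := fun j j' hne =>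
    (lt_or_gt_of_ne (Subtype.coe_ne_coe.2 hne)).imp (mul_succ_add_lt_mul_succ · N)
      (mul_succ_add_lt_mul_succ · N)
  have hsep : ∀ j j' : J, j ≠ j' → (σ j).Separated (σ j') := by
    intro j j' hne
    have hblocks := hblocks j j' hne
    have := hfirst j; have := hlast j; have := hfirst j'; have := hlast j'
    refine ⟨by omega, ?_⟩
    rw [hzone, hzone]
    refine disjoint_smul_of_notMem_visits ((hi j').2.trans (hlen j' j'.2).le) fun hmem => ?_
    have := Finset.mem_Icc.1 (hvisits j hmem)
    have := hi j'
    omega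
  have hinj : Function.Injective σ := by
    intro j j' heq
    by_contra hne
    have := (hsep j j' hne).1
    rw [heq, or_self] at this
    exact this.not_ge (σ j').first_le_last
  refine ⟨Finset.univ.image σ, ?_, ?_⟩
  · simp only [Finset.coe_image, Finset.coe_univ, Set.image_univ]
    rintro _ ⟨j, rfl⟩ _ ⟨j', rfl⟩ hne
    exact hsep j j' fun h => hne (h ▸ rfl)
  · rwa [Finset.card_image_of_injective _ hinj, Finset.card_univ, Fintype.card_coe]

theorem growthLT_card_isSparse (h1 : 1 ∈ C) (hC : HasDetours π S C) {μ : ℝ} (hμ1 : 1 ≤ μ)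
    (hμ : Tendsto (fun n : ℕ => ((saws S n).card : ℝ) ^ (1 / (n : ℝ))) atTop (nhds μ)) (k : ℕ) :
    GrowthLT (fun n => ((saws (S.image π) n).filter (IsSparse (C / C) k)).card) μ := by
  have hμ0 : 0 < μ := one_pos.trans_le hμ1
  induction k with
  | zero =>
    refine growthLT_of_le (C := 0) (fun _ => Nat.cast_nonneg _) (half_pos hμ0) (half_lt_self hμ0)
      fun n => ?_
    rw [Finset.filter_false_of_mem fun _ _ => not_isSparse_zero]
    simp
  | succ k ih =>
    set T := S.image π
    obtain ⟨N, hN⟩ := ih.exists_mul_lt_pow_succ T.card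
    obtain ⟨δ, hδ, hfew⟩ := exists_growthLT_card_blocksWith_le (T := T) (m := N + 1)
      (R := fun b => ¬IsSparse (C / C) k (b.take N)) (Nat.add_one_pos N) hμ0 <| by
        refine lt_of_le_of_lt ?_ hN
        simp only [not_not]
        exact mod_cast card_filter_isSparse_take_le T (C / C) k N
    obtain ⟨ι, _, D, hD⟩ := hC.exists_coversShortWords T N
    refine (hfew.add (growthLT_card_hasSites hμ hμ1 D hδ)).mono (fun _ => Nat.cast_nonneg _)
      fun n => ?_
    rw [Pi.add_apply, ← Nat.cast_add, Nat.cast_le]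
    refine (Finset.card_le_card fun w hw => ?_).trans (Finset.card_union_le _ _)
    obtain ⟨hwT, hsparse⟩ := Finset.mem_filter.1 hw
    obtain ⟨rfl, halph, -⟩ := mem_saws.1 hwT
    rw [Finset.mem_union, Finset.mem_filter, Finset.mem_filter]
    exact (le_or_gt _ _).imp (⟨hwT, ·⟩) fun h => ⟨hwT, hD.hasSites h1 halph hsparse h.le⟩

theorem limsup_card_saws_image_rpow_lt [Infinite Γ] (hS : Submonoid.closure (S : Set Γ) = ⊤)
    (hπ : ¬Function.Injective π) {μ : ℝ}
    (hμ : Tendsto (fun n : ℕ => ((saws S n).card : ℝ) ^ (1 / (n : ℝ))) atTop (nhds μ)) :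
    limsup (fun n : ℕ => ((saws (S.image π) n).card : ℝ) ^ (1 / (n : ℝ))) atTop < μ := by
  have hμ1 : 1 ≤ μ := ge_of_tendsto' hμ fun n =>
    Real.one_le_rpow (mod_cast (saws_nonempty hS n).card_pos) (by positivity)
  obtain ⟨C, h1, hC⟩ := exists_hasDetours hS hπ
  have hgrowth := growthLT_card_isSparse h1 hC hμ1 hμ ((C / C).card + 1)
  have hfilter : ∀ n, (saws (S.image π) n).filter (IsSparse (C / C) ((C / C).card + 1)) =
      saws (S.image π) n := fun n =>
    Finset.filter_true_of_mem fun w hw => (mem_saws.1 hw).2.2.isSparse _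
  simp only [hfilter] at hgrowth
  exact hgrowth.limsup_rpow_lt fun _ => Nat.cast_nonneg _

end Main

theorem connective_lt_of_add_relator_general {Γ Q : Type*} [Group Γ] [Infinite Γ] [Group Q]
    (S : Finset Γ) (hgen : Subgroup.closure (S : Set Γ) = ⊤)
    (μ : ℝ) (hμ : HasConnectiveConst (cayleyGraph (S : Set Γ)) μ)
    (π : Γ →* Q) (hπ : ¬Function.Injective π) :
    limsup (fun n : ℕ => (sawCount (cayleyGraph (π '' (S : Set Γ))) 1 n : ℝ) ^ (1 / (n : ℝ)))
      atTop < μ := by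
  have hclosure : Submonoid.closure ((S ∪ S⁻¹ : Finset Γ) : Set Γ) = ⊤ := by
    rw [Finset.coe_union, Finset.coe_inv, ← Subgroup.closure_toSubmonoid, hgen]
    rfl
  have hμ1 := hμ 1
  simp only [sawCount_cayleyGraph] at hμ1
  simp only [← Finset.coe_image, sawCount_cayleyGraph, ← Finset.image_inv, ← Finset.image_union]
  exact limsup_card_saws_image_rpow_lt hclosure hπ hμ1

end

/-- Let `Γ` be an infinite group generated by a finite set `S` with
`S = S⁻¹` and `id ∉ S`, and let `G = G(Γ,S)` be its Cayley graph, with connective constant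
`μ(G)`. Let `ρ ∈ Γ` with `ρ ≠ id`, let `N` be the normal closure of `{ρ}` in `Γ`, and let
`G_ρ` be the Cayley graph of `Γ/N` with respect to the image of `S`. Let `σ_n^ρ` denote
the number of `n`-step self-avoiding walks in `G_ρ` starting at the identity coset. Then
`limsup (σ_n^ρ)^{1/n} < μ(G)`. -/
theorem connective_lt_of_add_relator {Γ : Type*} [Group Γ] [Infinite Γ] (S : Finset Γ)
    (hsym : ∀ s ∈ S, s⁻¹ ∈ S) (hid : (1 : Γ) ∉ S)
    (hgen : Subgroup.closure (S : Set Γ) = ⊤)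
    (μ : ℝ) (hμ : HasConnectiveConst (cayleyGraph (S : Set Γ)) μ)
    (ρ : Γ) (hρ : ρ ≠ 1) :
    Filter.limsup
      (fun n : ℕ =>
        (sawCount
          (cayleyGraph ((QuotientGroup.mk '' (S : Set Γ)) :
            Set (Γ ⧸ Subgroup.normalClosure {ρ})))
          (1 : Γ ⧸ Subgroup.normalClosure {ρ}) n : ℝ) ^ (1 / (n : ℝ)))
      Filter.atTop < μ := by
  refine connective_lt_of_add_relator_general S hgen μ hμ
    (QuotientGroup.mk' (Subgroup.normalClosure {ρ})) fun hinj => hρ (hinj ?_)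
  rw [map_one, QuotientGroup.mk'_apply, QuotientGroup.eq_one_iff]
  exact Subgroup.subset_normalClosure rfl
end

section
/- Let A be a group acting on a set V and let B be a subgroup of A whose orbit partition of V is A-invariant, i.e. whenever u and v lie in the same B-orbit and γ ∈ A, then γu and γv lie in the same B-orbit. Then the normal closure N of B in A (the smallest normal subgroup of A containing B) has exactly the same orbits on V as B. -/
/-!
An `A`-invariant orbit partition of `B` makes `A` act on the set of `B`-orbits. The kernel of this
action is a normal subgroup containing `B`, hence it contains the normal closure of `B`: every
element of the normal closure maps each `B`-orbit to itself.
-/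

section

open MulAction Subgroup

variable {A V : Type*} [Group A] [MulAction A V]

theorem mem_ker_toPermHom_smulCon_quotient (c : SMulCon A V) {γ : A} :
    γ ∈ (toPermHom A c.Quotient).ker ↔ ∀ v : V, c.toSetoid (γ • v) v := by
  rw [MonoidHom.mem_ker, Equiv.ext_iff]
  exact Quotient.forall.trans (forall_congr' fun _ => Quotient.eq)

theorem smulCon_smul_of_mem_normalClosure (c : SMulCon A V) {s : Set A}
    (hs : ∀ β ∈ s, ∀ v : V, c.toSetoid (β • v) v) {γ : A} (hγ : γ ∈ normalClosure s) (v : V) :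
    c.toSetoid (γ • v) v := by
  have hle : normalClosure s ≤ (toPermHom A c.Quotient).ker :=
    normalClosure_le_normal fun β hβ => (mem_ker_toPermHom_smulCon_quotient c).2 (hs β hβ)
  exact (mem_ker_toPermHom_smulCon_quotient c).1 (hle hγ) v

theorem mem_orbit_subgroup_iff {H : Subgroup A} {v w : V} :
    w ∈ orbit H v ↔ ∃ γ ∈ H, γ • v = w := by
  simp only [mem_orbit_iff, Subtype.exists, subgroup_smul_def, exists_prop]

theorem orbit_normalClosure_eq_orbit (B : Subgroup A)
    (hB : ∀ (γ : A) {u v : V}, u ∈ orbit B v → γ • u ∈ orbit B (γ • v)) (v : V) :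
    orbit (normalClosure (B : Set A)) v = orbit B v := by
  let c : SMulCon A V := { orbitRel B V with smul := hB }
  have hBc : ∀ β ∈ (B : Set A), ∀ u : V, c.toSetoid (β • u) u :=
    fun β hβ u => mem_orbit u (⟨β, hβ⟩ : B)
  apply Set.Subset.antisymm
  · rintro _ ⟨γ, rfl⟩
    exact smulCon_smul_of_mem_normalClosure c hBc γ.2 v
  · rintro _ ⟨β, rfl⟩
    exact mem_orbit v (⟨β, le_normalClosure β.2⟩ : normalClosure (B : Set A))

end

/-- Let `A` be a group acting on a set `V` and let `B` be a subgroup of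
`A` whose orbit partition of `V` is `A`-invariant, i.e. whenever `u` and `v` lie in the
same `B`-orbit and `γ ∈ A`, then `γu` and `γv` lie in the same `B`-orbit. Then the normal
closure `N` of `B` in `A` has exactly the same orbits on `V` as `B`. -/
theorem normalClosure_orbits_eq {A V : Type*} [Group A] [MulAction A V] (B : Subgroup A)
    (hinv : ∀ u v : V, (∃ β ∈ B, β • u = v) → ∀ γ : A, ∃ β' ∈ B, β' • (γ • u) = γ • v) :
    ∀ v : V, {w : V | ∃ γ ∈ Subgroup.normalClosure (B : Set A), γ • v = w} =
      {w : V | ∃ β ∈ B, β • v = w} := by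
  simp only [← mem_orbit_subgroup_iff, Set.ofPred_mem_eq] at hinv ⊢
  exact orbit_normalClosure_eq_orbit B fun γ u v huv => hinv v u huv γ
end
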